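/- arXiv:2107.05703 — 6 statements merged into one kernel-verified Lean document; each statement's English description precedes it below -/
import Mathlib

section
/- Let Ω ⊂ ℝ² be a bounded simply connected open set whose boundary is the C² simple closed curve Γ, with interior unit normal n(θ) at the boundary point x(θ). Let v : closure(Ω) → ℝ² be continuous on the closure of Ω and continuously differentiable in Ω, with ∂₁v₂ − ∂₂v₁ = 0 and ∂₁v₁ + ∂₂v₂ = 0 at every point of Ω, and v(x(θ))·n(θ) = 0 for every θ. Then v is identically zero on Ω. -/
open Set

noncomputable section

abbrev E2 := EuclideanSpace ℝ (Fin 2)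

/-- Partial derivative in the `i`-th Cartesian coordinate direction. -/
noncomputable def pd (i : Fin 2) (f : E2 → ℝ) (y : E2) : ℝ :=
  fderiv ℝ f y (EuclideanSpace.single i 1)


section PrimitiveSection
open Topology Filter Metric

/-- Complex numbers with the discrete topology. -/
structure DiscC : Type where
  c : ℂ

instance : TopologicalSpace DiscC := ⊥
instance : DiscreteTopology DiscC := ⟨rfl⟩

lemma local_primitives {U : Set ℂ} (hU : IsOpen U) {f : ℂ → ℂ} (hf : DifferentiableOn ℂ f U) :
    ∀ i : U, ∃ (r : ℝ) (P : ℂ → ℂ), 0 < r ∧ ball (i : ℂ) r ⊆ U ∧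
      ∀ z ∈ ball (i : ℂ) r, HasDerivAt P (f z) z := by
  intro i
  obtain ⟨r, hr, hs⟩ := Metric.isOpen_iff.1 hU i i.2
  obtain ⟨g, hg⟩ := (convex_ball (i : ℂ) r).exists_forall_hasDerivWithinAt (hf.mono hs)
  exact ⟨r, g, hr, hs, fun z hz => (hg z hz).hasDerivAt (isOpen_ball.mem_nhds hz)⟩

lemma primitives_diff_const {f P Q : ℂ → ℂ} {a b : ℂ} {r s : ℝ}
    (hP : ∀ z ∈ ball a r, HasDerivAt P (f z) z) (hQ : ∀ z ∈ ball b s, HasDerivAt Q (f z) z) :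
    ∃ c, ∀ z ∈ ball a r ∩ ball b s, P z - Q z = c := by
  have h : ∀ z ∈ ball a r ∩ ball b s, HasDerivAt (fun z => P z - Q z) 0 z := fun z hz => by
    have := (hP z hz.1).fun_sub (hQ z hz.2)
    rwa [sub_self] at this
  refine IsOpen.exists_is_const_of_deriv_eq_zero (isOpen_ball.inter isOpen_ball)
    ((convex_ball a r).inter (convex_ball b s)).isPreconnected
    (fun z hz => (h z hz).differentiableAt.differentiableWithinAt) (fun z hz => (h z hz).deriv)

lemma exists_primitive {U : Set ℂ} (hU : IsOpen U) [SimplyConnectedSpace U] {f : ℂ → ℂ}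
    (hf : DifferentiableOn ℂ f U) : ∃ F : ℂ → ℂ, ∀ z ∈ U, HasDerivAt F (f z) z := by
  classical
  choose r P hr hs hP using local_primitives hU hf
  let shiftC : ℂ → DiscC → DiscC := fun c v => ⟨c + v.c⟩
  let Z : FiberBundleCore U U DiscC :=
    { baseSet := fun i => Subtype.val ⁻¹' ball (i : ℂ) (r i)
      isOpen_baseSet := fun i => isOpen_ball.preimage continuous_subtype_val
      indexAt := id
      mem_baseSet_at := fun x => by simp [hr]
      coordChange := fun i j x v => shiftC (P i x - P j x) v
      coordChange_self := fun i x hx v => by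
        show DiscC.mk ((P i x - P i x) + v.c) = v
        simp
      continuousOn_coordChange := fun i j => by
        obtain ⟨c, hc⟩ := primitives_diff_const (hP i) (hP j)
        have : Continuous (fun p : U × DiscC => shiftC c p.2) :=
          (continuous_of_discreteTopology (f := shiftC c)).comp continuous_snd
        refine this.continuousOn.congr ?_
        rintro ⟨x, v⟩ ⟨⟨h1, h2⟩, -⟩
        show shiftC (P i x - P j x) v = shiftC c v
        rw [hc x ⟨h1, h2⟩]
      coordChange_comp := fun i j k x hx v => by
        show DiscC.mk ((P j x - P k x) + ((P i x - P j x) + v.c)) = DiscC.mk ((P i x - P k x) + v.c)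
        congr 1
        ring }
  have cov : IsCoveringMap (Bundle.TotalSpace.proj : Z.TotalSpace → U) :=
    FiberBundle.isCoveringMap (F := DiscC) (E := Z.Fiber)
  have : LocallyPathConnectedSpace U := hU.locallyPathConnectedSpace
  obtain ⟨a₀⟩ : Nonempty U := inferInstance
  obtain ⟨S, ⟨-, hS⟩, -⟩ := cov.existsUnique_continuousMap_lifts (ContinuousMap.id U) a₀
    (⟨a₀, DiscC.mk 0⟩ : Z.TotalSpace) rfl
  have hS' : ∀ y : U, (S y).proj = y := fun y => congrFun hS y
  let val : U → ℂ := fun y => P (S y).proj (S y).proj + DiscC.c (S y).2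
  refine ⟨fun z => if h : z ∈ U then val ⟨z, h⟩ else 0, fun z hz => ?_⟩
  let i : U := ⟨z, hz⟩
  -- coordinate in the trivialization at i
  let q : U → DiscC := fun y => ((Z.localTriv i) (S y)).2
  have hq : ∀ y : U, (q y).c = val y - P i y := by
    intro y
    show ((P (S y).proj (S y).proj - P i (S y).proj) + DiscC.c (S y).2 : ℂ) = _
    simp only [val, hS']
    ring
  have hqc : ContinuousAt q i := by
    have h1 : ContinuousAt (Z.localTriv i) (S i) := by
      apply (Z.localTriv i).continuousAt
      rw [Z.mem_localTriv_source]
      show ((S i).proj : ℂ) ∈ ball (i : ℂ) (r i)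
      rw [hS']; simp [hr]
    exact (continuous_snd.continuousAt).comp (h1.comp S.continuous.continuousAt)
  have hev : ∀ᶠ y in 𝓝 i, q y = q i := by
    have := hqc (show ({q i} : Set DiscC) ∈ 𝓝 (q i) by simp)
    exact this
  have hev2 : ∀ᶠ y in 𝓝 z, ∃ h : y ∈ U, q ⟨y, h⟩ = q i := by
    have h2 : 𝓝 z = map Subtype.val (𝓝 i) := (hU.isOpenEmbedding_subtypeVal.map_nhds_eq i).symm
    rw [h2]
    exact hev.mono fun y hy => ⟨y.2, hy⟩
  have hd : HasDerivAt (fun y => P i y + (q i).c) (f z) z :=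
    (hP i z (by simp [i, hr])).add_const _
  refine hd.congr_of_eventuallyEq ?_
  filter_upwards [hev2] with y ⟨hy, hy2⟩
  rw [dif_pos hy, ← hy2, hq]
  ring

end PrimitiveSection

section BoxSection
open Topology Filter Metric

lemma subset_of_disjoint_frontier {X : Type*} [TopologicalSpace X] {U t : Set X} (hU : IsOpen U)
    (ht : IsPreconnected t) (hd : ∀ y ∈ t, y ∉ frontier U) (hne : (t ∩ U).Nonempty) : t ⊆ U := by
  refine ht.subset_left_of_subset_union hU (isClosed_closure (s := U)).isOpen_compl ?_ ?_ hne
  · exact disjoint_compl_right.mono_left subset_closure |>.mono_right le_rfl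
  · intro y hy
    by_cases h : y ∈ U
    · exact Or.inl h
    · refine Or.inr fun hc => hd y hy ?_
      rw [hU.frontier_eq]
      exact ⟨hc, h⟩

lemma near_param {L : ℝ} (hL : 0 < L) {z : ℝ → ℂ} (hzc : Continuous z)
    (hper : Function.Periodic z L) (hinj : InjOn z (Ico 0 L)) (θ₀ δ : ℝ) (hδ : 0 < δ) :
    ∃ ρ > 0, ∀ θ, dist (z θ) (z θ₀) < ρ → ∃ θ', |θ' - θ₀| < δ ∧ z θ' = z θ := by
  have hmod : ∀ a b, z (toIcoMod hL a b) = z b := fun a b => by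
    rw [← self_sub_toIcoDiv_zsmul]
    exact hper.sub_zsmul_eq _
  have hK : IsCompact (z '' Icc (θ₀ + δ) (θ₀ + L - δ)) := isCompact_Icc.image hzc
  have hnot : z θ₀ ∉ z '' Icc (θ₀ + δ) (θ₀ + L - δ) := by
    rintro ⟨b, hb, hbe⟩
    have h1 : toIcoMod hL 0 b = toIcoMod hL 0 θ₀ := by
      apply hinj
      · simpa using toIcoMod_mem_Ico hL 0 b
      · simpa using toIcoMod_mem_Ico hL 0 θ₀
      · rw [hmod, hmod, hbe]
    rw [toIcoMod_inj, AddCommGroup.modEq_iff_eq_add_zsmul] at h1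
    obtain ⟨k, hk⟩ := h1
    simp only [zsmul_eq_mul] at hk
    have h2 : (k : ℝ) * L < 0 := by linarith [hb.1]
    have h3 : (-1 : ℝ) * L < k * L := by linarith [hb.2]
    have h4 : (k : ℝ) < 0 := by by_contra h; push Not at h; nlinarith
    have h5 : (-1 : ℝ) < k := lt_of_mul_lt_mul_right h3 hL.le
    have h6 : k < 0 := by exact_mod_cast h4
    have h7 : -1 < k := by exact_mod_cast h5
    omega
  obtain ⟨ρ, hρ, hb⟩ := Metric.isOpen_iff.1 hK.isClosed.isOpen_compl (z θ₀) hnot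
  refine ⟨ρ, hρ, fun θ hθ => ?_⟩
  have hm := toIcoMod_mem_Ico hL θ₀ θ
  have hz := hmod θ₀ θ
  set m := toIcoMod hL θ₀ θ
  have hmK : m ∉ Icc (θ₀ + δ) (θ₀ + L - δ) := fun h => hb (by simpa using hθ) ⟨m, h, hz⟩
  by_cases h : m < θ₀ + δ
  · exact ⟨m, by rw [abs_lt]; constructor <;> linarith [hm.1], hz⟩
  · have h2 : θ₀ + L - δ < m := by
      by_contra h3
      exact hmK ⟨not_lt.1 h, not_lt.1 h3⟩
    exact ⟨m - L, by rw [abs_lt]; constructor <;> linarith [hm.2], by rw [hper.sub_eq, hz]⟩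

/-- Local flattening map. -/
noncomputable def flatMap (z z' : ℝ → ℂ) (θ₀ : ℝ) (p : ℝ × ℝ) : ℂ :=
  z p.1 + p.2 * (Complex.I * z' θ₀)

lemma flatMap_nhds {z z' : ℝ → ℂ} (hz : ∀ θ, HasDerivAt z (z' θ) θ) (hz' : Continuous z')
    (hunit : ∀ θ, ‖z' θ‖ = 1) (θ₀ : ℝ) (p : ℝ × ℝ)
    (hp : 0 < (starRingEnd ℂ (z' θ₀) * z' p.1).re) :
    map (flatMap z z' θ₀) (𝓝 p) = 𝓝 (flatMap z z' θ₀ p) := by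
  have h1 : HasStrictDerivAt z (z' p.1) p.1 :=
    hasStrictDerivAt_of_hasDerivAt_of_continuousAt (.of_forall hz) hz'.continuousAt
  have h2 : HasStrictFDerivAt (fun p : ℝ × ℝ => z p.1)
      ((ContinuousLinearMap.toSpanSingleton ℝ (z' p.1)).comp (ContinuousLinearMap.fst ℝ ℝ ℝ)) p :=
    h1.hasStrictFDerivAt.comp p hasStrictFDerivAt_fst
  have h3 : HasStrictFDerivAt (fun p : ℝ × ℝ => (p.2 : ℂ) * (Complex.I * z' θ₀))
      ((ContinuousLinearMap.toSpanSingleton ℝ (Complex.I * z' θ₀)).comp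
        (ContinuousLinearMap.snd ℝ ℝ ℝ)) p := by
    have := ((ContinuousLinearMap.toSpanSingleton ℝ (Complex.I * z' θ₀)).comp
        (ContinuousLinearMap.snd ℝ ℝ ℝ)).hasStrictFDerivAt (x := p)
    refine this.congr_of_eventuallyEq (.of_forall fun q => ?_)
    simp
  refine (h2.add h3).map_nhds_eq_of_surj ?_
  rw [LinearMap.range_eq_top]
  intro w
  set t := z' θ₀
  set u := z' p.1
  set d := (starRingEnd ℂ t * u).re with hd
  let a : ℝ := (starRingEnd ℂ t * w).re / d
  let b : ℝ := (starRingEnd ℂ t * (w - a * u)).im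
  refine ⟨(a, b), ?_⟩
  have hre : (starRingEnd ℂ t * (w - a * u)).re = 0 := by
    have : starRingEnd ℂ t * (w - a * u) = starRingEnd ℂ t * w - a * (starRingEnd ℂ t * u) := by
      ring
    rw [this, Complex.sub_re, Complex.re_ofReal_mul, ← hd]
    simp only [a]
    field_simp
    simp
  have hb : (b : ℂ) * Complex.I = starRingEnd ℂ t * (w - a * u) := by
    apply Complex.ext
    · simp [hre]
    · simp [b]
  have htt : t * starRingEnd ℂ t = 1 := by
    rw [Complex.mul_conj, Complex.normSq_eq_norm_sq, hunit]; simp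
  show a • u + b • (Complex.I * t) = w
  simp only [Complex.real_smul]
  linear_combination t * hb + (w - a * u) * htt

lemma local_box {L : ℝ} (hL : 0 < L) {z z' : ℝ → ℂ} (hz : ∀ θ, HasDerivAt z (z' θ) θ)
    (hz' : Continuous z') (hper : Function.Periodic z L) (hinj : InjOn z (Ico 0 L))
    (hunit : ∀ θ, ‖z' θ‖ = 1) {U : Set ℂ} (hU : IsOpen U) (hfr : frontier U = range z)
    (hint : ∀ θ, ∃ ε > 0, ∀ s : ℝ, 0 < s → s < ε → z θ + s * (Complex.I * z' θ) ∈ U) (θ₀ : ℝ) :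
    ∃ δ > 0, ∃ η > 0,
      (∀ θ s, |θ - θ₀| < δ → map (flatMap z z' θ₀) (𝓝 (θ, s)) = 𝓝 (flatMap z z' θ₀ (θ, s))) ∧
      (∀ θ s, |θ - θ₀| < δ → |s| < η → flatMap z z' θ₀ (θ, s) ∈ range z → s = 0) ∧
      (∀ θ s, |θ - θ₀| < δ → 0 < s → s < η → flatMap z z' θ₀ (θ, s) ∈ U) ∧
      ((∀ θ s, |θ - θ₀| < δ → -η < s → s < 0 → flatMap z z' θ₀ (θ, s) ∈ U) ∨
       (∀ θ s, |θ - θ₀| < δ → -η < s → s < 0 → flatMap z z' θ₀ (θ, s) ∉ U)) := by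
  have hzc : Continuous z := continuous_iff_continuousAt.2 fun θ => (hz θ).continuousAt
  have hΦc : Continuous (flatMap z z' θ₀) := by unfold flatMap; fun_prop
  have htt : starRingEnd ℂ (z' θ₀) * z' θ₀ = 1 := by
    rw [mul_comm, Complex.mul_conj, Complex.normSq_eq_norm_sq, hunit]; simp
  obtain ⟨δ₁, hδ₁, hpos⟩ : ∃ δ > 0, ∀ θ, |θ - θ₀| < δ →
      0 < (starRingEnd ℂ (z' θ₀) * z' θ).re := by
    have hc : Continuous fun θ => (starRingEnd ℂ (z' θ₀) * z' θ).re := by fun_prop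
    have := (hc.tendsto θ₀).eventually (lt_mem_nhds (show (0:ℝ) < _ by rw [htt]; simp))
    obtain ⟨δ, hδ, h⟩ := Metric.eventually_nhds_iff.1 this
    exact ⟨δ, hδ, fun θ hθ => h (by simpa [Real.dist_eq] using hθ)⟩
  have habs : ∀ {θ δ : ℝ}, |θ - θ₀| < δ ↔ θ ∈ Ioo (θ₀ - δ) (θ₀ + δ) := by
    intro θ δ
    rw [abs_lt, mem_Ioo]
    constructor <;> rintro ⟨h1, h2⟩ <;> constructor <;> linarith
  have hmono : StrictMonoOn (fun θ => (starRingEnd ℂ (z' θ₀) * z θ).re)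
      (Ioo (θ₀ - δ₁) (θ₀ + δ₁)) := by
    have hd : ∀ θ, HasDerivAt (fun θ => (starRingEnd ℂ (z' θ₀) * z θ).re)
        ((starRingEnd ℂ (z' θ₀) * z' θ).re) θ := fun θ =>
      (Complex.reCLM.hasFDerivAt.comp_hasDerivAt θ ((hz θ).const_mul (starRingEnd ℂ (z' θ₀))))
    refine strictMonoOn_of_deriv_pos (convex_Ioo _ _) (fun θ _ => (hd θ).continuousAt.continuousWithinAt) ?_
    intro θ hθ
    rw [interior_Ioo] at hθ
    rw [(hd θ).deriv]
    exact hpos θ (habs.2 hθ)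
  have hreΦ : ∀ θ s, (starRingEnd ℂ (z' θ₀) * flatMap z z' θ₀ (θ, s)).re
      = (starRingEnd ℂ (z' θ₀) * z θ).re := by
    intro θ s
    have : starRingEnd ℂ (z' θ₀) * flatMap z z' θ₀ (θ, s)
        = starRingEnd ℂ (z' θ₀) * z θ + s * Complex.I := by
      simp only [flatMap]
      linear_combination (s * Complex.I) * htt
    rw [this]; simp
  obtain ⟨ρ, hρ, hnear⟩ := near_param hL hzc hper hinj θ₀ δ₁ hδ₁
  obtain ⟨η, hη, hball⟩ : ∃ η > 0, ∀ p : ℝ × ℝ, dist p (θ₀, 0) < η →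
      dist (flatMap z z' θ₀ p) (z θ₀) < ρ := by
    have := Metric.continuous_iff.1 hΦc (θ₀, 0) ρ hρ
    simpa [flatMap] using this
  obtain ⟨ε, hε, hintε⟩ := hint θ₀
  have hdist : ∀ θ s, |θ - θ₀| < min δ₁ η → |s| < η → dist (θ, s) (θ₀, (0:ℝ)) < η := by
    intro θ s h1 h2
    rw [Prod.dist_eq, Real.dist_eq, Real.dist_eq, sub_zero]
    exact max_lt (h1.trans_le (min_le_right _ _)) h2
  have hzero : ∀ θ s, |θ - θ₀| < min δ₁ η → |s| < η → flatMap z z' θ₀ (θ, s) ∈ range z → s = 0 := by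
    rintro θ s h1 h2 ⟨θ', hθ'⟩
    obtain ⟨θ'', h3, h4⟩ := hnear θ' (by rw [hθ']; exact hball _ (hdist θ s h1 h2))
    have h5 : θ'' = θ := by
      apply hmono.injOn (habs.1 h3) (habs.1 (h1.trans_le (min_le_left _ _)))
      show (starRingEnd ℂ (z' θ₀) * z θ'').re = (starRingEnd ℂ (z' θ₀) * z θ).re
      rw [h4, hθ', hreΦ]
    rw [← h4, h5] at hθ'
    have h6 : (s : ℂ) * (Complex.I * z' θ₀) = 0 := by
      simp only [flatMap] at hθ'
      linear_combination -hθ'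
    have h7 : z' θ₀ ≠ 0 := by
      intro h; have := hunit θ₀; simp [h] at this
    simpa [h7] using h6
  have hconn : ∀ a b : ℝ, IsPreconnected (flatMap z z' θ₀ ''
      (Ioo (θ₀ - min δ₁ η) (θ₀ + min δ₁ η) ×ˢ Ioo a b)) := fun a b =>
    (isPreconnected_Ioo.prod isPreconnected_Ioo).image _ hΦc.continuousOn
  have hmin : 0 < min δ₁ η := lt_min hδ₁ hη
  refine ⟨min δ₁ η, hmin, η, hη, ?_, hzero, ?_, ?_⟩
  · intro θ s h
    exact flatMap_nhds hz hz' hunit θ₀ (θ, s) (hpos θ (h.trans_le (min_le_left _ _)))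
  · intro θ s h1 h2 h3
    refine subset_of_disjoint_frontier hU (hconn 0 η) ?_ ?_ ⟨(θ, s), ⟨habs.1 h1, h2, h3⟩, rfl⟩
    · rintro _ ⟨⟨θ', s'⟩, ⟨h4, h5⟩, rfl⟩ hf
      rw [hfr] at hf
      exact h5.1.ne' (hzero θ' s' (habs.2 h4) (by rw [abs_of_pos h5.1]; exact h5.2) hf)
    · have hme : 0 < min ε η := lt_min hε hη
      refine ⟨_, ⟨(θ₀, min ε η / 2), ⟨⟨by linarith, by linarith⟩, ⟨by linarith, ?_⟩⟩, rfl⟩, ?_⟩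
      · have := min_le_right ε η
        show min ε η / 2 < η
        linarith
      · apply hintε _ (by linarith)
        have := min_le_left ε η
        linarith
  · by_cases hex : ∃ θ s, |θ - θ₀| < min δ₁ η ∧ -η < s ∧ s < 0 ∧ flatMap z z' θ₀ (θ, s) ∈ U
    · left
      obtain ⟨θ₁, s₁, g1, g2, g3, g4⟩ := hex
      intro θ s h1 h2 h3
      refine subset_of_disjoint_frontier hU (hconn (-η) 0) ?_ ?_ ⟨(θ, s), ⟨habs.1 h1, h2, h3⟩, rfl⟩
      · rintro _ ⟨⟨θ', s'⟩, ⟨h4, h5⟩, rfl⟩ hf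
        rw [hfr] at hf
        exact h5.2.ne (hzero θ' s' (habs.2 h4)
          (by rw [abs_of_neg h5.2]; linarith [h5.1]) hf)
      · exact ⟨_, ⟨(θ₁, s₁), ⟨habs.1 g1, g2, g3⟩, rfl⟩, g4⟩
    · right
      intro θ s h1 h2 h3 h4
      exact hex ⟨θ, s, h1, h2, h3, h4⟩

end BoxSection

section CoreSection
open Topology Filter Metric

lemma isOpen_box (θ₀ a b : ℝ) : IsOpen {p : ℝ × ℝ | |p.1 - θ₀| < a ∧ |p.2| < b} := by
  have h1 : IsOpen {p : ℝ × ℝ | |p.1 - θ₀| < a} := isOpen_lt (by fun_prop) continuous_const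
  have h2 : IsOpen {p : ℝ × ℝ | |p.2| < b} := isOpen_lt (by fun_prop) continuous_const
  exact h1.inter h2

lemma one_sided {L : ℝ} (hL : 0 < L) {z z' : ℝ → ℂ} (hz : ∀ θ, HasDerivAt z (z' θ) θ)
    (hz' : Continuous z') (hper : Function.Periodic z L) (hinj : InjOn z (Ico 0 L))
    (hunit : ∀ θ, ‖z' θ‖ = 1) {U : Set ℂ} (hU : IsOpen U) (hb : Bornology.IsBounded U)
    (hfr : frontier U = range z)
    (hint : ∀ θ, ∃ ε > 0, ∀ s : ℝ, 0 < s → s < ε → z θ + s * (Complex.I * z' θ) ∈ U) (θ : ℝ) :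
    closure U ∉ 𝓝 (z θ) := by
  have hclos : ∀ y, y ∈ closure U ↔ y ∈ U ∨ y ∈ range z := by
    intro y
    rw [← hfr, closure_eq_self_union_frontier]; rfl
  have hloc : ∀ θ₀, ∃ δ > 0, (∀ θ, |θ - θ₀| < δ → closure U ∈ 𝓝 (z θ)) ∨
      (∀ θ, |θ - θ₀| < δ → closure U ∉ 𝓝 (z θ)) := by
    intro θ₀
    obtain ⟨δ, hδ, η, hη, hmap, hzero, hup, hlow⟩ :=
      local_box hL hz hz' hper hinj hunit hU hfr hint θ₀
    have h0 : ∀ θ, flatMap z z' θ₀ (θ, 0) = z θ := fun θ => by simp [flatMap]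
    refine ⟨δ, hδ, ?_⟩
    rcases hlow with hlow | hlow
    · left
      intro θ hθ
      rw [← h0 θ, ← hmap θ 0 hθ, mem_map]
      have hopen : IsOpen {p : ℝ × ℝ | |p.1 - θ₀| < δ ∧ |p.2| < η} :=
        isOpen_box θ₀ _ _
      filter_upwards [hopen.mem_nhds (show (θ, (0:ℝ)) ∈ _ from ⟨hθ, by simpa using hη⟩)]
      rintro ⟨a, s⟩ ⟨h1, h2⟩
      simp only at h1 h2
      rw [mem_preimage, hclos]
      rcases lt_trichotomy s 0 with h | h | h
      · exact Or.inl (hlow a s h1 (abs_lt.1 h2).1 h)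
      · subst h; exact Or.inr ⟨a, (h0 a).symm⟩
      · exact Or.inl (hup a s h1 h (abs_lt.1 h2).2)
    · right
      intro θ hθ hmem
      rw [← h0 θ, ← hmap θ 0 hθ, mem_map] at hmem
      have hc : Tendsto (fun s : ℝ => (θ, s)) (𝓝[<] 0) (𝓝 (θ, 0)) :=
        (Continuous.tendsto (by fun_prop) 0).mono_left nhdsWithin_le_nhds
      have h1 : ∀ᶠ s in 𝓝[<] (0:ℝ), flatMap z z' θ₀ (θ, s) ∈ closure U := hc hmem
      have h2 : ∀ᶠ s : ℝ in 𝓝[<] 0, s ∈ Ioo (-η) 0 := Ioo_mem_nhdsLT (by linarith)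
      obtain ⟨s, hs1, hs2⟩ := (Eventually.and h1 h2).exists
      have hs3 : flatMap z z' θ₀ (θ, s) ∈ closure U := hs1
      rw [hclos] at hs3
      rcases hs3 with h | h
      · exact hlow θ s hθ hs2.1 hs2.2 h
      · exact hs2.2.ne (hzero θ s hθ (by rw [abs_of_neg hs2.2]; linarith [hs2.1]) h)
  have hlc : IsLocallyConstant (fun θ => (closure U ∈ 𝓝 (z θ) : Prop)) := by
    rw [IsLocallyConstant.iff_eventually_eq]
    intro θ₀
    obtain ⟨δ, hδ, h⟩ := hloc θ₀
    have : ∀ᶠ θ in 𝓝 θ₀, |θ - θ₀| < δ := by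
      filter_upwards [Metric.ball_mem_nhds θ₀ hδ] with θ hθ
      simpa [Real.dist_eq] using hθ
    filter_upwards [this] with θ hθ
    have h00 : |θ₀ - θ₀| < δ := by simpa using hδ
    rcases h with h | h
    · simp [h θ hθ, h θ₀ h00]
    · simp [h θ hθ, h θ₀ h00]
  intro hmem
  have hall : ∀ θ', closure U ∈ 𝓝 (z θ') := by
    intro θ'
    have := hlc.apply_eq_of_isPreconnected isPreconnected_univ (mem_univ θ) (mem_univ θ')
    exact this.mp hmem
  have hop : IsOpen (closure U) := by
    rw [isOpen_iff_mem_nhds]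
    intro y hy
    rcases (hclos y).1 hy with h | ⟨θ', rfl⟩
    · exact mem_of_superset (hU.mem_nhds h) subset_closure
    · exact hall θ'
  have huniv : closure U = univ :=
    IsClopen.eq_univ ⟨isClosed_closure, hop⟩ ⟨z θ, (hclos _).2 (Or.inr ⟨θ, rfl⟩)⟩
  have := hb.closure
  rw [huniv] at this
  exact NormedSpace.unbounded_univ ℂ ℂ this

lemma boundary_limit {L : ℝ} (hL : 0 < L) {z z' : ℝ → ℂ} (hz : ∀ θ, HasDerivAt z (z' θ) θ)
    (hz' : Continuous z') (hper : Function.Periodic z L) (hinj : InjOn z (Ico 0 L))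
    (hunit : ∀ θ, ‖z' θ‖ = 1) {U : Set ℂ} (hU : IsOpen U) (hb : Bornology.IsBounded U)
    (hfr : frontier U = range z)
    (hint : ∀ θ, ∃ ε > 0, ∀ s : ℝ, 0 < s → s < ε → z θ + s * (Complex.I * z' θ) ∈ U)
    {f F : ℂ → ℂ} (hfc : ContinuousOn f (closure U)) (hF : ∀ y ∈ U, HasDerivAt F (f y) y)
    (htan : ∀ θ, (f (z θ) * z' θ).im = 0) (θ₀ : ℝ) :
    ∃ c : ℝ, ∃ δ > 0, ∀ θ, |θ - θ₀| < δ → Tendsto (fun y => (F y).im) (𝓝[U] (z θ)) (𝓝 c) := by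
  have hclos : ∀ y, y ∈ closure U ↔ y ∈ U ∨ y ∈ range z := by
    intro y
    rw [← hfr, closure_eq_self_union_frontier]; rfl
  have hrU : ∀ θ, z θ ∉ U := fun θ h => by
    have : z θ ∈ frontier U := hfr ▸ ⟨θ, rfl⟩
    rw [hU.frontier_eq] at this
    exact this.2 h
  have hzc : Continuous z := continuous_iff_continuousAt.2 fun θ => (hz θ).continuousAt
  obtain ⟨δ, hδ, η, hη, hmap, hzero, hup, hlow⟩ :=
    local_box hL hz hz' hper hinj hunit hU hfr hint θ₀
  have hΦc : Continuous (flatMap z z' θ₀) := by unfold flatMap; fun_prop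
  have h0 : ∀ θ, flatMap z z' θ₀ (θ, 0) = z θ := fun θ => by simp [flatMap]
  -- the lower side is outside
  replace hlow : ∀ θ s, |θ - θ₀| < δ → -η < s → s < 0 → flatMap z z' θ₀ (θ, s) ∉ U := by
    rcases hlow with hlow | hlow
    · exfalso
      apply one_sided hL hz hz' hper hinj hunit hU hb hfr hint θ₀
      have hθ : |θ₀ - θ₀| < δ := by simpa using hδ
      rw [← h0 θ₀, ← hmap θ₀ 0 hθ, mem_map]
      have hopen : IsOpen {p : ℝ × ℝ | |p.1 - θ₀| < δ ∧ |p.2| < η} :=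
        isOpen_box θ₀ _ _
      filter_upwards [hopen.mem_nhds (show (θ₀, (0:ℝ)) ∈ _ from ⟨hθ, by simpa using hη⟩)]
      rintro ⟨a, s⟩ ⟨h1, h2⟩
      simp only at h1 h2
      rw [mem_preimage, hclos]
      rcases lt_trichotomy s 0 with h | h | h
      · exact Or.inl (hlow a s h1 (abs_lt.1 h2).1 h)
      · subst h; exact Or.inr ⟨a, (h0 a).symm⟩
      · exact Or.inl (hup a s h1 h (abs_lt.1 h2).2)
    · exact hlow
  have hcomp : IsCompact (closure U) := hb.isCompact_closure
  obtain ⟨M, hM⟩ := hcomp.exists_bound_of_continuousOn hfc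
  have hθ₀ : |θ₀ - θ₀| < δ := by simpa using hδ
  -- normal limit
  obtain ⟨g, hgL, hgE⟩ : ∃ g : ℝ → ℝ, LipschitzWith M.toNNReal g ∧
      EqOn (fun s : ℝ => (F (flatMap z z' θ₀ (θ₀, s))).im) g (Ioo 0 η) := by
    apply LipschitzOnWith.extend_real
    have hd : ∀ s ∈ Ioo (0:ℝ) η, HasDerivAt (fun s : ℝ => (F (flatMap z z' θ₀ (θ₀, s))).im)
        ((f (flatMap z z' θ₀ (θ₀, s)) * (Complex.I * z' θ₀)).im) s := by
      intro s hs
      have h1 : HasDerivAt (fun s : ℝ => flatMap z z' θ₀ (θ₀, s)) (Complex.I * z' θ₀) s := by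
        have := ((Complex.ofRealCLM.hasDerivAt (x := s)).mul_const (Complex.I * z' θ₀)).const_add (z θ₀)
        simpa [flatMap] using this
      have h2 := (hF _ (hup θ₀ s hθ₀ hs.1 hs.2)).comp s h1
      exact Complex.imCLM.hasFDerivAt.comp_hasDerivAt s h2
    refine (convex_Ioo 0 η).lipschitzOnWith_of_nnnorm_hasDerivWithin_le
      (fun s hs => (hd s hs).hasDerivWithinAt) fun s hs => ?_
    rw [← NNReal.coe_le_coe, coe_nnnorm]
    refine le_trans ?_ (Real.le_coe_toNNReal M)
    rw [Real.norm_eq_abs]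
    refine (Complex.abs_im_le_norm _).trans ?_
    rw [norm_mul, norm_mul, hunit]
    simpa using hM _ (subset_closure (hup θ₀ s hθ₀ hs.1 hs.2))
  -- uniform convergence
  have hunif : ∀ ε > 0, ∃ κ > 0, ∀ θ s, |θ - θ₀| ≤ δ / 2 → 0 < s → s < κ →
      |(F (flatMap z z' θ₀ (θ, s))).im - g 0| < ε := by
    intro ε hε
    let K : Set (ℝ × ℝ) := Icc (θ₀ - δ / 2) (θ₀ + δ / 2) ×ˢ Icc 0 (η / 2)
    have hKc : IsCompact K := isCompact_Icc.prod isCompact_Icc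
    have hIcc : ∀ {θ : ℝ}, |θ - θ₀| ≤ δ / 2 ↔ θ ∈ Icc (θ₀ - δ / 2) (θ₀ + δ / 2) := by
      intro θ
      rw [abs_le, mem_Icc]
      constructor <;> rintro ⟨h1, h2⟩ <;> constructor <;> linarith
    have hKU : MapsTo (flatMap z z' θ₀) K (closure U) := by
      rintro ⟨θ, s⟩ ⟨h1, h2⟩
      have h1' := hIcc.2 h1
      rcases h2.1.eq_or_lt with h | h
      · simp only at h
        rw [← h, h0, hclos]; exact Or.inr ⟨θ, rfl⟩
      · exact subset_closure (hup θ s (by simp only at h1'; linarith) h (by linarith [h2.2]))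
    have hH : ContinuousOn (fun p : ℝ × ℝ => (f (flatMap z z' θ₀ p) * z' p.1).im) K := by
      refine Complex.continuous_im.comp_continuousOn (ContinuousOn.mul ?_ ?_)
      · exact hfc.comp hΦc.continuousOn hKU
      · exact (hz'.comp continuous_fst).continuousOn
    have huc := hKc.uniformContinuousOn_of_continuous hH
    obtain ⟨κ₁, hκ₁, hu⟩ := Metric.uniformContinuousOn_iff.1 huc (ε / (2 * δ)) (by positivity)
    have hg0 : ∀ᶠ s in 𝓝 (0:ℝ), dist (g s) (g 0) < ε / 2 :=
      (hgL.continuous.tendsto 0).eventually (Metric.ball_mem_nhds _ (by positivity))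
    obtain ⟨κ₂, hκ₂, hg0⟩ := Metric.eventually_nhds_iff.1 hg0
    refine ⟨min (min κ₁ κ₂) (η / 2), by positivity, fun θ s hθ hs hsκ => ?_⟩
    have hs1 : s < κ₁ := hsκ.trans_le ((min_le_left _ _).trans (min_le_left _ _))
    have hs2 : s < κ₂ := hsκ.trans_le ((min_le_left _ _).trans (min_le_right _ _))
    have hs3 : s < η / 2 := hsκ.trans_le (min_le_right _ _)
    have hd : ∀ a ∈ Icc (θ₀ - δ / 2) (θ₀ + δ / 2),
        HasDerivAt (fun a : ℝ => (F (flatMap z z' θ₀ (a, s))).im)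
        ((f (flatMap z z' θ₀ (a, s)) * z' a).im) a := by
      intro a ha
      have h1 : HasDerivAt (fun a : ℝ => flatMap z z' θ₀ (a, s)) (z' a) a := by
        simpa [flatMap] using (hz a).add_const ((s : ℂ) * (Complex.I * z' θ₀))
      have h2 := (hF _ (hup a s (by linarith [hIcc.2 ha]) hs (by linarith))).comp a h1
      exact Complex.imCLM.hasFDerivAt.comp_hasDerivAt a h2
    have hbd : ∀ a ∈ Icc (θ₀ - δ / 2) (θ₀ + δ / 2),
        ‖(f (flatMap z z' θ₀ (a, s)) * z' a).im‖ ≤ ε / (2 * δ) := by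
      intro a ha
      have := hu (a, s) ⟨ha, hs.le, hs3.le⟩ (a, 0) ⟨ha, le_rfl, by positivity⟩ (by
        rw [Prod.dist_eq, dist_self, Real.dist_eq, sub_zero, abs_of_pos hs]
        exact max_lt hκ₁ hs1)
      simp only [h0, htan, Real.dist_eq, sub_zero] at this
      exact this.le
    have hmv := Convex.norm_image_sub_le_of_norm_hasDerivWithin_le
      (fun a ha => (hd a ha).hasDerivWithinAt) hbd (convex_Icc _ _)
      (hIcc.1 (show |θ₀ - θ₀| ≤ δ / 2 by simp; positivity)) (hIcc.1 hθ)
    have h5 : ε / (2 * δ) * ‖θ - θ₀‖ ≤ ε / 4 := by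
      rw [Real.norm_eq_abs]
      calc ε / (2 * δ) * |θ - θ₀| ≤ ε / (2 * δ) * (δ / 2) := by gcongr
        _ = ε / 4 := by field_simp; norm_num
    have h6 : dist (g s) (g 0) < ε / 2 := hg0 (by
      rw [Real.dist_eq, sub_zero, abs_of_pos hs]; exact hs2)
    rw [← hgE ⟨hs, by linarith⟩, Real.dist_eq] at h6
    rw [Real.norm_eq_abs] at hmv
    simp only at hmv h6
    rw [abs_lt] at h6 ⊢
    have h7 := abs_le.1 (hmv.trans h5)
    constructor <;> linarith [h6.1, h6.2, h7.1, h7.2]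
  refine ⟨g 0, δ / 2, by positivity, fun θ hθ => ?_⟩
  rw [Metric.tendsto_nhds]
  intro ε hε
  obtain ⟨κ, hκ, hun⟩ := hunif ε hε
  rw [eventually_nhdsWithin_iff, ← h0 θ, ← hmap θ 0 (by linarith), eventually_map]
  have hopen : IsOpen {p : ℝ × ℝ | |p.1 - θ₀| < δ / 2 ∧ |p.2| < min κ η} :=
    isOpen_box θ₀ _ _
  filter_upwards [hopen.mem_nhds (show (θ, (0:ℝ)) ∈ _ from ⟨hθ, by simp [hκ, hη]⟩)]
  rintro ⟨a, s⟩ ⟨h1, h2⟩ hmem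
  simp only at h1 h2
  have h2' := abs_lt.1 h2
  rcases lt_trichotomy s 0 with h | h | h
  · exact absurd hmem (hlow a s (by linarith) (by linarith [min_le_right κ η, h2'.1]) h)
  · subst h; rw [h0] at hmem; exact absurd hmem (hrU a)
  · rw [Real.dist_eq]
    exact hun a s h1.le h (by linarith [min_le_left κ η, h2'.2])

lemma eventually_zero_of_extr {U : Set ℂ} (hU : IsOpen U) {f F : ℂ → ℂ}
    (hF : ∀ y ∈ U, HasDerivAt F (f y) y) {k : ℂ} (hk : k ≠ 0) {y : ℂ} (hy : y ∈ U)
    (hm : ∀ᶠ w in 𝓝 y, (k * F w).re ≤ (k * F y).re) : ∀ᶠ w in 𝓝 y, f w = 0 := by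
  have hd : ∀ w ∈ U, HasDerivAt (fun w => Complex.exp (k * F w))
      (Complex.exp (k * F w) * (k * f w)) w := fun w hw => ((hF w hw).const_mul k).cexp
  have hUy : ∀ᶠ w in 𝓝 y, w ∈ U := hU.mem_nhds hy
  have h1 := Complex.eventually_eq_of_isLocalMax_norm (f := fun w => Complex.exp (k * F w)) (c := y)
    (hUy.mono fun w hw => (hd w hw).differentiableAt) (by
      filter_upwards [hm] with w hw
      simpa [Complex.norm_exp] using hw)
  filter_upwards [h1.eventually_nhds, hUy] with w hw hwU
  have h2 : HasDerivAt (fun w => Complex.exp (k * F w)) 0 w :=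
    (hasDerivAt_const w (Complex.exp (k * F y))).congr_of_eventuallyEq hw
  have h3 := (hd w hwU).unique h2
  simpa [hk, Complex.exp_ne_zero] using h3

theorem core {L : ℝ} (hL : 0 < L) {z z' : ℝ → ℂ} (hz : ∀ θ, HasDerivAt z (z' θ) θ)
    (hz' : Continuous z') (hper : Function.Periodic z L) (hinj : InjOn z (Ico 0 L))
    (hunit : ∀ θ, ‖z' θ‖ = 1) {U : Set ℂ} (hU : IsOpen U) (hb : Bornology.IsBounded U)
    (hsc : SimplyConnectedSpace U)
    (hfr : frontier U = range z)
    (hint : ∀ θ, ∃ ε > 0, ∀ s : ℝ, 0 < s → s < ε → z θ + s * (Complex.I * z' θ) ∈ U)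
    {f : ℂ → ℂ} (hfc : ContinuousOn f (closure U)) (hf : DifferentiableOn ℂ f U)
    (htan : ∀ θ, (f (z θ) * z' θ).im = 0) : ∀ y ∈ U, f y = 0 := by
  classical
  obtain ⟨F, hF⟩ := exists_primitive hU hf
  choose c δ hδ hlim using
    boundary_limit hL hz hz' hper hinj hunit hU hb hfr hint hfc hF htan
  have hne : ∀ θ, (𝓝[U] (z θ)).NeBot := fun θ => by
    rw [← mem_closure_iff_nhdsWithin_neBot]
    exact frontier_subset_closure (hfr ▸ ⟨θ, rfl⟩)
  have hlc : IsLocallyConstant c := by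
    rw [IsLocallyConstant.iff_eventually_eq]
    intro θ₀
    filter_upwards [Metric.ball_mem_nhds θ₀ (hδ θ₀)] with θ hθ
    have := hne θ
    exact tendsto_nhds_unique (hlim θ θ (by simpa using hδ θ))
      (hlim θ₀ θ (by simpa [Real.dist_eq] using hθ))
  have hlim' : ∀ θ, Tendsto (fun y => (F y).im) (𝓝[U] (z θ)) (𝓝 (c 0)) := fun θ => by
    rw [hlc.apply_eq_of_isPreconnected isPreconnected_univ (mem_univ 0) (mem_univ θ)]
    exact hlim θ θ (by simpa using hδ θ)
  let g : ℂ → ℝ := fun y => if y ∈ U then (F y).im else c 0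
  have hgU : ∀ y ∈ U, g y = (F y).im := fun y hy => if_pos hy
  have hgU' : ∀ y ∉ U, g y = c 0 := fun y hy => if_neg hy
  have hgc : ContinuousOn g (closure U) := by
    intro y hy
    apply ContinuousAt.continuousWithinAt
    by_cases hyU : y ∈ U
    · have h1 : ContinuousAt (fun y => (F y).im) y :=
        Complex.continuous_im.continuousAt.comp (hF y hyU).continuousAt
      exact h1.congr ((hU.eventually_mem hyU).mono fun w hw => (hgU w hw).symm)
    · have hyf : y ∈ range z := by
        rw [← hfr, hU.frontier_eq]; exact ⟨hy, hyU⟩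
      obtain ⟨θ, rfl⟩ := hyf
      rw [ContinuousAt, hgU' _ hyU, ← nhdsWithin_univ, ← union_compl_self U, nhdsWithin_union]
      refine Tendsto.sup ?_ ?_
      · exact (hlim' θ).congr' (eventually_mem_nhdsWithin.mono fun w hw => (hgU w hw).symm)
      · exact tendsto_const_nhds.congr'
          (eventually_mem_nhdsWithin.mono fun w hw => (hgU' w hw).symm)
  have hcomp : IsCompact (closure U) := hb.isCompact_closure
  obtain ⟨y₀, hy₀⟩ : U.Nonempty := by
    obtain ⟨a⟩ : Nonempty U := inferInstance
    exact ⟨a, a.2⟩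
  have hcne : (closure U).Nonempty := ⟨y₀, subset_closure hy₀⟩
  obtain ⟨a, haU, ha⟩ := hcomp.exists_isMaxOn hcne hgc
  obtain ⟨b, hbU, hb'⟩ := hcomp.exists_isMinOn hcne hgc
  have hmax : ∀ y ∈ U, (∀ w ∈ U, (F w).im ≤ (F y).im) → ∀ᶠ w in 𝓝 y, f w = 0 := by
    intro y hy h
    refine eventually_zero_of_extr hU hF (k := -Complex.I) (by simp) hy ?_
    filter_upwards [hU.mem_nhds hy] with w hw
    simpa using h w hw
  have hmin : ∀ y ∈ U, (∀ w ∈ U, (F y).im ≤ (F w).im) → ∀ᶠ w in 𝓝 y, f w = 0 := by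
    intro y hy h
    refine eventually_zero_of_extr hU hF (k := Complex.I) (by simp) hy ?_
    filter_upwards [hU.mem_nhds hy] with w hw
    simpa using h w hw
  obtain ⟨p, hpU, hp⟩ : ∃ p ∈ U, ∀ᶠ w in 𝓝 p, f w = 0 := by
    by_cases h1 : a ∈ U
    · refine ⟨a, h1, hmax a h1 fun w hw => ?_⟩
      have := ha (subset_closure hw)
      simpa [hgU w hw, hgU a h1] using this
    by_cases h2 : b ∈ U
    · refine ⟨b, h2, hmin b h2 fun w hw => ?_⟩
      have := hb' (subset_closure hw)
      simpa [hgU w hw, hgU b h2] using this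
    have hconst : ∀ w ∈ U, (F w).im = c 0 := by
      intro w hw
      have h3 : g w ≤ g a := ha (subset_closure hw)
      have h4 : g b ≤ g w := hb' (subset_closure hw)
      rw [hgU' a h1, hgU w hw] at h3
      rw [hgU' b h2, hgU w hw] at h4
      exact le_antisymm h3 h4
    exact ⟨y₀, hy₀, hmax y₀ hy₀ fun w hw => by rw [hconst w hw, hconst y₀ hy₀]⟩
  have hpre : IsPreconnected U := by
    rw [isPreconnected_iff_preconnectedSpace]; infer_instance
  have han : AnalyticOnNhd ℂ f U := hf.analyticOnNhd hU
  exact fun y hy => han.eqOn_zero_of_preconnected_of_eventuallyEq_zero hpre hpU hp hy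

end CoreSection


theorem stmt_8
    (L : ℝ) (hL : 0 < L)
    (x : ℝ → E2) (hx : ContDiff ℝ 2 x)
    (hper : ∀ θ, x (θ + L) = x θ)
    (hinj : InjOn x (Ico 0 L))
    (hunit : ∀ θ, deriv x θ 0 ^ 2 + deriv x θ 1 ^ 2 = 1)
    (n : ℝ → E2)
    (hn : ∀ θ, n θ 0 = -(deriv x θ 1) ∧ n θ 1 = deriv x θ 0)
    (Ω : Set E2)
    (hΩo : IsOpen Ω) (hΩb : Bornology.IsBounded Ω)
    (hsc : SimplyConnectedSpace ↥Ω)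
    (hfront : frontier Ω = Set.range x)
    (hintn : ∀ θ, ∃ ε > 0, ∀ s : ℝ, 0 < s → s < ε → x θ + s • n θ ∈ Ω)
    (v : E2 → E2)
    (hvc : ContinuousOn v (closure Ω))
    (hv1 : ContDiffOn ℝ 1 v Ω)
    (hcurl : ∀ y ∈ Ω, pd 0 (fun z => v z 1) y - pd 1 (fun z => v z 0) y = 0)
    (hdiv : ∀ y ∈ Ω, pd 0 (fun z => v z 0) y + pd 1 (fun z => v z 1) y = 0)
    (htan : ∀ θ, v (x θ) 0 * n θ 0 + v (x θ) 1 * n θ 1 = 0) :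
    ∀ y ∈ Ω, v y = 0 := by
  let e : ℂ ≃ₗᵢ[ℝ] E2 := Complex.orthonormalBasisOneI.repr
  have e0 : ∀ w, e w 0 = w.re := fun w => by
    simp [e, Complex.orthonormalBasisOneI_repr_apply]
  have e1 : ∀ w, e w 1 = w.im := fun w => by
    simp [e, Complex.orthonormalBasisOneI_repr_apply]
  have sre : ∀ y, (e.symm y).re = y 0 := fun y => by rw [← e0, e.apply_symm_apply]
  have sim : ∀ y, (e.symm y).im = y 1 := fun y => by rw [← e1, e.apply_symm_apply]
  have eone : e 1 = EuclideanSpace.single 0 1 := by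
    ext i; fin_cases i <;> simp [e0, e1]
  have eI : e Complex.I = EuclideanSpace.single 1 1 := by
    ext i; fin_cases i <;> simp [e0, e1]
  have hecont : Continuous e := e.continuous
  have hcl : closure (e ⁻¹' Ω) = e ⁻¹' closure Ω := (e.toHomeomorph.preimage_closure Ω).symm
  have hfr : frontier (e ⁻¹' Ω) = e ⁻¹' frontier Ω := (e.toHomeomorph.preimage_frontier Ω).symm
  have hxd : ∀ θ, HasDerivAt x (deriv x θ) θ := fun θ =>
    ((hx.differentiable (by norm_num)) θ).hasDerivAt
  have hxc : Continuous (deriv x) := hx.continuous_deriv (by norm_num)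
  have hcoord : ∀ y ∈ Ω, ∀ i, DifferentiableAt ℝ (fun z => v z i) y := by
    intro y hy i
    have h1 : DifferentiableAt ℝ v y :=
      ((hv1.differentiableOn (by norm_num)) y hy).differentiableAt (hΩo.mem_nhds hy)
    exact (differentiableAt_euclidean.1 h1) i
  have key := core hL (z := fun θ => e.symm (x θ)) (z' := fun θ => e.symm (deriv x θ))
    (U := e ⁻¹' Ω) (f := fun w => (v (e w) 0 : ℂ) - (v (e w) 1 : ℂ) * Complex.I)
    (fun θ => e.symm.toContinuousLinearEquiv.hasFDerivAt.comp_hasDerivAt θ (hxd θ))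
    (e.symm.continuous.comp hxc)
    (fun θ => by simp [hper])
    (fun a ha b hb h => hinj ha hb (e.symm.injective h))
    (fun θ => by
      rw [e.symm.norm_map, EuclideanSpace.norm_eq, Fin.sum_univ_two]
      simp [hunit])
    (hΩo.preimage hecont)
    (by
      have := e.symm.lipschitz.isBounded_image hΩb
      exact this.subset (fun w hw => ⟨e w, hw, e.symm_apply_apply w⟩))
    ((e.toHomeomorph.isSimplyConnected_preimage (s := Ω)).2 hsc)
    (by
      rw [hfr, hfront]
      ext w
      simp only [mem_preimage, mem_range]
      constructor
      · rintro ⟨θ, h⟩; exact ⟨θ, by rw [h, e.symm_apply_apply]⟩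
      · rintro ⟨θ, h⟩; exact ⟨θ, by rw [← h, e.apply_symm_apply]⟩)
    (fun θ => by
      obtain ⟨ε, hε, h⟩ := hintn θ
      refine ⟨ε, hε, fun s hs hs' => ?_⟩
      have h2 := h s hs hs'
      have h3 : e (e.symm (x θ) + s * (Complex.I * e.symm (deriv x θ))) = x θ + s • n θ := by
        ext i
        fin_cases i
        · simp [e0, sre, sim, hn]
        · simp [e1, sre, sim, hn]
      rw [mem_preimage, h3]; exact h2)
    (by
      rw [hcl]
      have h1 : ContinuousOn (fun w => v (e w)) (e ⁻¹' closure Ω) :=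
        hvc.comp hecont.continuousOn (fun w hw => hw)
      have h2 : ∀ i, ContinuousOn (fun w => ((v (e w) i : ℝ) : ℂ)) (e ⁻¹' closure Ω) := fun i =>
        Complex.continuous_ofReal.comp_continuousOn
          ((EuclideanSpace.proj (𝕜 := ℝ) i).continuous.comp_continuousOn h1)
      exact (h2 0).sub ((h2 1).mul continuousOn_const))
    (by
      intro w hw
      refine DifferentiableAt.differentiableWithinAt ?_
      rw [differentiableAt_complex_iff_differentiableAt_real]
      have hc : ∀ i, HasFDerivAt (fun w => ((v (e w) i : ℝ) : ℂ))
          (Complex.ofRealCLM.comp ((fderiv ℝ (fun z => v z i) (e w)).comp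
            (e.toContinuousLinearEquiv : ℂ →L[ℝ] E2))) w := fun i =>
        Complex.ofRealCLM.hasFDerivAt.comp w
          ((hcoord (e w) hw i).hasFDerivAt.comp w e.toContinuousLinearEquiv.hasFDerivAt)
      have hF := (hc 0).sub ((hc 1).mul_const Complex.I)
      refine ⟨hF.differentiableAt, ?_⟩
      have hF' := hF.fderiv
      have a1 := hcurl (e w) hw
      have a2 := hdiv (e w) hw
      simp only [pd, ← eone, ← eI] at a1 a2
      erw [hF']
      apply Complex.ext
      · simp
        linarith
      · simp
        linarith)
    (fun θ => by
      have := htan θ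
      rw [(hn θ).1, (hn θ).2] at this
      simp [sre, sim]
      linarith)
  intro y hy
  have h := key (e.symm y) (by simpa using hy)
  simp only [e.apply_symm_apply] at h
  have hr := congrArg Complex.re h
  have hi := congrArg Complex.im h
  simp at hr hi
  ext i
  fin_cases i
  · simpa using hr
  · simpa using hi
end
end

section
/- Let x : ℝ → ℝ² be a C², L-periodic, unit-speed curve, injective on [0,L), with image Γ, normal n(θ) = (−x₂'(θ), x₁'(θ)), and define X(s,θ) = x(θ) + s·n(θ). Then there exists δ > 0 such that: X restricted to (−δ,δ) × [0,L) is injective; the image of X restricted to (−δ,δ) × ℝ equals the open neighborhood V_δ = { y ∈ ℝ² : dist(y,Γ) < δ }; for every (s,θ) with |s| < δ one has dist(X(s,θ), Γ) = |s|; and for every y ∈ V_δ there is a unique point of Γ at distance dist(y,Γ) from y. -/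
open Set

noncomputable section

/-- quadratic Taylor bound for a periodic `C²` curve -/
lemma taylor_aux (L : ℝ) (hL : 0 < L) (x : ℝ → E2) (hx : ContDiff ℝ 2 x)
    (hper : ∀ θ, x (θ + L) = x θ) :
    ∃ M : ℝ, 0 < M ∧ ∀ θ φ : ℝ,
      ‖x φ - x θ - (φ - θ) • deriv x θ‖ ≤ M * |φ - θ| ^ 2 := by
  have hx1 : ContDiff ℝ 1 (deriv x) := by
    have : ContDiff ℝ (1 + 1) x := by simpa [one_add_one_eq_two] using hx
    exact (contDiff_succ_iff_deriv.1 this).2.2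
  have hdx : Differentiable ℝ x := hx.differentiable (by norm_num)
  have hddx : Differentiable ℝ (deriv x) := hx1.differentiable (by norm_num)
  have hc2 : Continuous (deriv (deriv x)) := hx1.continuous_deriv (by norm_num)
  have hp1 : ∀ θ, deriv x (θ + L) = deriv x θ := fun θ => by
    rw [← deriv_comp_add_const]; simp only [hper]
  have hp2 : Function.Periodic (deriv (deriv x)) L := fun θ => by
    rw [← deriv_comp_add_const]; simp only [hp1]
  obtain ⟨M, hMpos, hM⟩ := (hp2.isBounded_of_continuous hL.ne' hc2).exists_pos_norm_le
  have hlip : ∀ θ φ, ‖deriv x φ - deriv x θ‖ ≤ M * |φ - θ| := fun θ φ =>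
    convex_univ.norm_image_sub_le_of_norm_hasDerivWithin_le (f := deriv x)
      (fun t _ => (hddx t).hasDerivAt.hasDerivWithinAt)
      (fun t _ => hM _ (mem_range_self t)) (mem_univ θ) (mem_univ φ)
  refine ⟨M, hMpos, fun θ φ => ?_⟩
  have key := (convex_uIcc θ φ).norm_image_sub_le_of_norm_hasDerivWithin_le
      (f := fun t => x t - t • deriv x θ) (f' := fun t => deriv x t - deriv x θ)
      (C := M * |φ - θ|) (x := θ) (y := φ)
      (fun t _ => by
        have h2 : HasDerivAt (fun t : ℝ => t • deriv x θ) ((1 : ℝ) • deriv x θ) t :=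
          (hasDerivAt_id t).smul_const _
        rw [one_smul] at h2
        exact ((hdx t).hasDerivAt.sub h2).hasDerivWithinAt)
      (fun t ht => (hlip θ t).trans (mul_le_mul_of_nonneg_left (abs_sub_left_of_mem_uIcc ht) hMpos.le))
      left_mem_uIcc right_mem_uIcc
  have e : x φ - x θ - (φ - θ) • deriv x θ =
      (x φ - φ • deriv x θ) - (x θ - θ • deriv x θ) := by rw [sub_smul]; abel
  rw [e]
  refine key.trans (le_of_eq ?_)
  rw [Real.norm_eq_abs]; ring

lemma inj_aux (L : ℝ) (hL : 0 < L) (x : ℝ → E2)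
    (hper : Function.Periodic x L) (hinj : InjOn x (Ico 0 L)) (θ φ : ℝ)
    (h : x φ = x θ) (hd : |φ - θ| ≤ L / 2) : φ = θ := by
  have h1 := toIcoMod_add_toIcoDiv_zsmul hL 0 φ
  have h2 := toIcoMod_add_toIcoDiv_zsmul hL 0 θ
  have e1 : x φ = x (toIcoMod hL 0 φ) := by
    conv_lhs => rw [← h1]
    exact hper.zsmul _ _
  have e2 : x θ = x (toIcoMod hL 0 θ) := by
    conv_lhs => rw [← h2]
    exact hper.zsmul _ _
  have e3 := hinj (toIcoMod_mem_Ico' hL φ) (toIcoMod_mem_Ico' hL θ) (by rw [← e1, ← e2, h])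
  rw [e3] at h1
  have e4 : φ - θ = ((toIcoDiv hL 0 φ - toIcoDiv hL 0 θ : ℤ) : ℝ) * L := by
    rw [zsmul_eq_mul] at h1 h2
    push_cast
    linarith
  have e5 : toIcoDiv hL 0 φ - toIcoDiv hL 0 θ = 0 := by
    rw [e4, abs_mul, abs_of_pos hL] at hd
    have : |((toIcoDiv hL 0 φ - toIcoDiv hL 0 θ : ℤ) : ℝ)| < 1 := by
      by_contra hc
      push Not at hc
      nlinarith
    rw [← Int.cast_abs] at this
    exact Int.abs_lt_one_iff.1 (by exact_mod_cast this)
  rw [e5] at e4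
  simp at e4
  linarith

lemma far_aux (L : ℝ) (hL : 0 < L) (x : ℝ → E2) (hx : Continuous x)
    (hper : Function.Periodic x L) (hinj : InjOn x (Ico 0 L)) (r : ℝ) (hr : 0 < r) :
    ∃ m : ℝ, 0 < m ∧ ∀ θ φ : ℝ, r ≤ |φ - θ| → |φ - θ| ≤ L / 2 → m ≤ ‖x φ - x θ‖ := by
  let K : Set (ℝ × ℝ) := (Icc 0 L ×ˢ Icc (-L) (2 * L)) ∩
    {p | r ≤ |p.2 - p.1| ∧ |p.2 - p.1| ≤ L / 2}
  have hK : IsCompact K := by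
    refine (isCompact_Icc.prod isCompact_Icc).inter_right ?_
    have hc : Continuous fun p : ℝ × ℝ => |p.2 - p.1| := by fun_prop
    exact (isClosed_le continuous_const hc).inter (isClosed_le hc continuous_const)
  have hcont : ContinuousOn (fun p : ℝ × ℝ => ‖x p.2 - x p.1‖) K := by fun_prop
  have hred : ∃ m : ℝ, 0 < m ∧ ∀ p ∈ K, m ≤ ‖x p.2 - x p.1‖ := by
    refine hK.exists_forall_le' hcont (a := 0) ?_
    intro p hp
    rw [norm_pos_iff, sub_ne_zero]
    intro h
    have := inj_aux L hL x hper hinj p.1 p.2 h hp.2.2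
    have h3 := hp.2.1
    rw [this] at h3
    simp at h3
    linarith
  obtain ⟨m, hm, hmK⟩ := hred
  refine ⟨m, hm, fun θ φ h1 h2 => ?_⟩
  have e := toIcoMod_add_toIcoDiv_zsmul hL 0 θ
  have hmem := toIcoMod_mem_Ico' hL θ
  set k := toIcoDiv hL 0 θ
  have e' : toIcoMod hL 0 θ = θ - k • L := by rw [← e]; simp
  rw [e'] at hmem
  have := hmK (θ - k • L, φ - k • L) (by
    have h4 := abs_le.1 h2
    refine ⟨⟨⟨hmem.1, hmem.2.le⟩, ?_, ?_⟩, ?_, ?_⟩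
    · have := hmem.1
      simp only; linarith
    · have := hmem.2
      simp only; linarith
    · simpa using h1
    · simpa using h2)
  simpa only [hper.sub_zsmul_eq] using this

lemma reach_aux (L : ℝ) (hL : 0 < L) (x : ℝ → E2) (hx : ContDiff ℝ 2 x)
    (hper : ∀ θ, x (θ + L) = x θ) (hinj : InjOn x (Ico 0 L))
    (hT : ∀ θ, ‖deriv x θ‖ = 1) (n : ℝ → E2) (hN : ∀ θ, ‖n θ‖ = 1)
    (hTN : ∀ θ, inner ℝ (deriv x θ) (n θ) = 0) :
    ∃ C : ℝ, 0 < C ∧ ∀ θ φ : ℝ, |inner ℝ (x φ - x θ) (n θ)| ≤ C * ‖x φ - x θ‖ ^ 2 := by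
  obtain ⟨M, hM, hTay⟩ := taylor_aux L hL x hx hper
  obtain ⟨m, hm, hfar⟩ := far_aux L hL x hx.continuous hper hinj (1 / (2 * M)) (by positivity)
  refine ⟨4 * M + 1 / m, by positivity, fun θ φ => ?_⟩
  -- reduce φ
  wlog hφ : |φ - θ| ≤ L / 2 generalizing φ
  · have h1 := toIcoMod_add_toIcoDiv_zsmul hL (θ - L / 2) φ
    have h2 := toIcoMod_mem_Ico hL (θ - L / 2) φ
    have h3 := this (toIcoMod hL (θ - L / 2) φ) (by
      rw [abs_le]; constructor <;> linarith [h2.1, h2.2])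
    have e1 : x φ = x (toIcoMod hL (θ - L / 2) φ) := by
      conv_lhs => rw [← h1]
      exact Function.Periodic.zsmul hper _ _
    rwa [← e1] at h3
  set d := ‖x φ - x θ‖ with hd
  have hd0 : 0 ≤ d := norm_nonneg _
  rcases le_total (1 / (2 * M)) |φ - θ| with h | h
  · have h1 := hfar θ φ h hφ
    have h2 : |inner ℝ (x φ - x θ) (n θ)| ≤ d := by
      simpa [hN] using abs_real_inner_le_norm (x φ - x θ) (n θ)
    refine h2.trans ?_
    have h3 : d ≤ 1 / m * d ^ 2 := by
      rw [one_div, inv_mul_eq_div, le_div_iff₀ hm]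
      nlinarith
    nlinarith [mul_nonneg hM.le (sq_nonneg d)]
  · have ht := hTay θ φ
    have e : inner ℝ (x φ - x θ) (n θ) =
        inner ℝ (x φ - x θ - (φ - θ) • deriv x θ) (n θ) := by
      rw [inner_sub_left (x φ - x θ), real_inner_smul_left, hTN]; simp
    have h1 : |inner ℝ (x φ - x θ) (n θ)| ≤ M * |φ - θ| ^ 2 := by
      rw [e]
      refine (abs_real_inner_le_norm _ _).trans ?_
      rw [hN, mul_one]; exact ht
    have h2 : |φ - θ| ≤ 2 * d := by
      have h3 : ‖(φ - θ) • deriv x θ‖ ≤ d + ‖x φ - x θ - (φ - θ) • deriv x θ‖ := by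
        have := norm_sub_le (x φ - x θ) (x φ - x θ - (φ - θ) • deriv x θ)
        rwa [sub_sub_cancel] at this
      rw [norm_smul, hT, mul_one, Real.norm_eq_abs] at h3
      have h4 : M * |φ - θ| ^ 2 ≤ |φ - θ| / 2 := by
        have h5 : M * |φ - θ| ≤ 1 / 2 := by
          calc M * |φ - θ| ≤ M * (1 / (2 * M)) := by gcongr
            _ = 1 / 2 := by field_simp
        nlinarith [abs_nonneg (φ - θ)]
      linarith
    have h6 : |φ - θ| ^ 2 ≤ (2 * d) ^ 2 := by gcongr
    have h7 : 0 ≤ 1 / m * d ^ 2 := by positivity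
    nlinarith

theorem stmt_12
    (L : ℝ) (hL : 0 < L)
    (x : ℝ → E2) (hx : ContDiff ℝ 2 x)
    (hper : ∀ θ, x (θ + L) = x θ)
    (hinj : InjOn x (Ico 0 L))
    (hunit : ∀ θ, deriv x θ 0 ^ 2 + deriv x θ 1 ^ 2 = 1)
    (n : ℝ → E2)
    (hn : ∀ θ, n θ 0 = -(deriv x θ 1) ∧ n θ 1 = deriv x θ 0)
    (X : ℝ → ℝ → E2) (hX : ∀ s θ, X s θ = x θ + s • n θ) :
    ∃ δ : ℝ, 0 < δ ∧
      -- X restricted to (−δ,δ) × [0,L) is injective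
      InjOn (fun p : ℝ × ℝ => X p.1 p.2) (Ioo (-δ) δ ×ˢ Ico 0 L) ∧
      -- the image of X restricted to (−δ,δ) × ℝ is the δ-neighborhood of Γ
      (fun p : ℝ × ℝ => X p.1 p.2) '' (Ioo (-δ) δ ×ˢ (univ : Set ℝ)) =
        {y : E2 | Metric.infDist y (Set.range x) < δ} ∧
      -- dist(X(s,θ), Γ) = |s|
      (∀ s θ : ℝ, |s| < δ → Metric.infDist (X s θ) (Set.range x) = |s|) ∧
      -- unique nearest point on Γ
      (∀ y : E2, Metric.infDist y (Set.range x) < δ →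
        ∃! z : E2, z ∈ Set.range x ∧ dist y z = Metric.infDist y (Set.range x)) := by
  have hT : ∀ θ, ‖deriv x θ‖ = 1 := fun θ => by
    rw [EuclideanSpace.norm_eq, Fin.sum_univ_two]
    simp [hunit θ]
  have hN : ∀ θ, ‖n θ‖ = 1 := fun θ => by
    rw [EuclideanSpace.norm_eq, Fin.sum_univ_two]
    simp [(hn θ).1, (hn θ).2, add_comm, hunit θ]
  have hTN : ∀ θ, inner ℝ (deriv x θ) (n θ) = 0 := fun θ => by
    rw [PiLp.inner_apply, Fin.sum_univ_two]
    simp [(hn θ).1, (hn θ).2]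
    ring
  obtain ⟨C, hC, hreach⟩ := reach_aux L hL x hx hper hinj hT n hN hTN
  set δ : ℝ := 1 / (2 * C) with hδ
  have hδ0 : 0 < δ := by positivity
  have hcompact : IsCompact (range x) :=
    Function.Periodic.compact_of_continuous hper hL.ne' hx.continuous
  have hne : (range x).Nonempty := range_nonempty x
  have hs : ∀ s : ℝ, |s| < δ → 0 < 1 - 2 * C * |s| := fun s h => by
    rw [hδ, lt_div_iff₀ (by positivity)] at h
    linarith
  -- quantitative nearest point estimate
  have hquad : ∀ s θ φ : ℝ,
      s ^ 2 + (1 - 2 * C * |s|) * ‖x φ - x θ‖ ^ 2 ≤ dist (X s θ) (x φ) ^ 2 := by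
    intro s θ φ
    have e : X s θ - x φ = s • n θ - (x φ - x θ) := by rw [hX]; abel
    rw [dist_eq_norm, e, norm_sub_sq_real (s • n θ), norm_smul, hN, real_inner_smul_left,
      mul_one, Real.norm_eq_abs, sq_abs, real_inner_comm]
    have h1 : s * inner ℝ (x φ - x θ) (n θ) ≤ |s| * (C * ‖x φ - x θ‖ ^ 2) :=
      (le_abs_self _).trans (by rw [abs_mul]; gcongr; exact hreach θ φ)
    linarith
  have hdist0 : ∀ s θ : ℝ, dist (X s θ) (x θ) = |s| := fun s θ => by
    rw [dist_eq_norm, hX]; simp [norm_smul, hN]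
  have hinf : ∀ s θ : ℝ, |s| < δ → Metric.infDist (X s θ) (range x) = |s| := by
    intro s θ h
    apply le_antisymm
    · rw [← hdist0 s θ]
      exact Metric.infDist_le_dist_of_mem (mem_range_self θ)
    · rw [Metric.le_infDist hne]
      rintro _ ⟨φ, rfl⟩
      have h1 := hquad s θ φ
      have h2 := mul_nonneg (hs s h).le (sq_nonneg ‖x φ - x θ‖)
      apply abs_le_of_sq_le_sq _ dist_nonneg |> fun h => h
      linarith
  have huniq : ∀ s θ φ : ℝ, |s| < δ → dist (X s θ) (x φ) = |s| → x φ = x θ := by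
    intro s θ φ h hd
    have h1 := hquad s θ φ
    rw [hd, sq_abs] at h1
    have h2 : ‖x φ - x θ‖ ^ 2 ≤ 0 := by
      by_contra hc
      push Not at hc
      nlinarith [mul_pos (hs s h) hc]
    have h3 : ‖x φ - x θ‖ = 0 := by nlinarith [norm_nonneg (x φ - x θ)]
    exact sub_eq_zero.1 (norm_eq_zero.1 h3)
  have hsurj : ∀ y : E2, Metric.infDist y (range x) < δ → ∃ s θ, |s| < δ ∧ X s θ = y := by
    intro y hy
    obtain ⟨_, ⟨θ, rfl⟩, hθ⟩ := hcompact.exists_infDist_eq_dist hne y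
    have hmin : IsLocalMin (fun φ => ‖y - x φ‖ ^ 2) θ := by
      refine Filter.Eventually.of_forall fun φ => ?_
      have : dist y (x θ) ≤ dist y (x φ) :=
        hθ ▸ Metric.infDist_le_dist_of_mem (mem_range_self φ)
      rw [dist_eq_norm, dist_eq_norm] at this
      simp only
      gcongr
    have hder : HasDerivAt (fun φ => ‖y - x φ‖ ^ 2)
        (2 * inner ℝ (y - x θ) (-deriv x θ)) θ :=
      ((((hx.differentiable (by norm_num)) θ).hasDerivAt).const_sub y).norm_sq
    have h0 := hmin.hasDerivAt_eq_zero hder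
    have h1 : (y - x θ) 0 * deriv x θ 0 + (y - x θ) 1 * deriv x θ 1 = 0 := by
      rw [PiLp.inner_apply, Fin.sum_univ_two] at h0
      simp at h0 ⊢
      linarith
    have hy' : X (inner ℝ (y - x θ) (n θ)) θ = y := by
      rw [hX, ← eq_sub_iff_add_eq', PiLp.inner_apply, Fin.sum_univ_two]
      have hu := hunit θ
      generalize hv : y - x θ = v at *
      ext i
      fin_cases i
      · simp [(hn θ).1, (hn θ).2]
        linear_combination (-deriv x θ 0) * h1 + v 0 * hu
      · simp [(hn θ).1, (hn θ).2]
        linear_combination (-deriv x θ 1) * h1 + v 1 * hu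
    refine ⟨_, θ, ?_, hy'⟩
    rw [← hdist0 _ θ, hy', ← hθ]
    exact hy
  refine ⟨δ, hδ0, ?_, ?_, hinf, ?_⟩
  · rintro ⟨s, θ⟩ ⟨hs1, hθ⟩ ⟨t, φ⟩ ⟨ht1, hφ⟩ h
    simp only at h hs1 ht1 hθ hφ
    have hs2 : |s| < δ := abs_lt.2 hs1
    have ht2 : |t| < δ := abs_lt.2 ht1
    have h1 : |s| = |t| := by rw [← hinf s θ hs2, ← hinf t φ ht2, h]
    have h2 : x φ = x θ := huniq s θ φ hs2 (by rw [h, hdist0, h1])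
    have h3 : φ = θ := hinj hφ hθ h2
    subst h3
    rw [hX, hX] at h
    have h4 : (s - t) • n φ = 0 := by rw [sub_smul, sub_eq_zero]; exact add_left_cancel h
    have h5 : n φ ≠ 0 := by
      intro h0
      have := hN φ
      rw [h0] at this
      simp at this
    have h6 := (smul_eq_zero.1 h4).resolve_right h5
    rw [sub_eq_zero.1 h6]
  · ext y
    constructor
    · rintro ⟨⟨s, θ⟩, ⟨hs1, -⟩, rfl⟩
      have hs2 : |s| < δ := abs_lt.2 hs1
      simp only [mem_ofPred_eq]
      rw [hinf s θ hs2]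
      exact hs2
    · intro hy
      obtain ⟨s, θ, h, rfl⟩ := hsurj y hy
      exact ⟨(s, θ), ⟨abs_lt.1 h, mem_univ _⟩, rfl⟩
  · intro y hy
    obtain ⟨s, θ, h, rfl⟩ := hsurj y hy
    rw [hinf s θ h]
    refine ⟨x θ, ⟨mem_range_self θ, hdist0 s θ⟩, ?_⟩
    rintro _ ⟨⟨φ, rfl⟩, hφ⟩
    exact huniq s θ φ h hφ
end
end

section
/- Let x : ℝ → ℝ² be a C², L-periodic, unit-speed curve, injective on [0,L), with image Γ and normal n(θ) = (−x₂'(θ), x₁'(θ)), X(s,θ) = x(θ) + s·n(θ), and let δ > 0 be small enough that X is injective on (−δ,δ)×[0,L) with image { y : dist(y,Γ) < δ } and dist(X(s,θ),Γ) = |s|. Then for every θ and every s with 0 < s < δ, the function y ↦ dist(y,Γ) is differentiable at X(s,θ) and its gradient there equals n(θ); for −δ < s < 0 the gradient equals −n(θ). -/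
open Set

noncomputable section

theorem grad_norm_aux (q v : E2) (hv : ‖v‖ = 1) (a : ℝ) (ha : 0 < a) :
    HasFDerivAt (fun y : E2 => ‖y - q‖) (innerSL ℝ v) (q + a • v) := by
  have h1 : HasFDerivAt (fun y : E2 => ‖y - q‖ ^ 2)
      (2 • (innerSL ℝ ((q + a • v) - q))) (q + a • v) := by
    have h := ((hasFDerivAt_id (𝕜 := ℝ) (q + a • v)).sub_const q).norm_sq
    simpa using h
  have hn : ‖(q + a • v) - q‖ = a := by
    simp [norm_smul, hv, abs_of_pos ha]
  have h2 := h1.sqrt (by rw [hn]; positivity)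
  have h3 : (fun y : E2 => √(‖y - q‖ ^ 2)) = fun y : E2 => ‖y - q‖ := by
    funext y; exact Real.sqrt_sq (norm_nonneg _)
  rw [h3] at h2
  refine h2.congr_fderiv ?_
  rw [hn, Real.sqrt_sq ha.le]
  ext w
  simp [inner_smul_left]
  field_simp

theorem grad_dist_aux (S : Set E2) (q v : E2) (hq : q ∈ S) (hv : ‖v‖ = 1) (s t : ℝ)
    (hs : 0 < s) (hst : s < t) (h1 : Metric.infDist (q + s • v) S = s)
    (h2 : Metric.infDist (q + t • v) S = t) :
    HasGradientAt (fun y : E2 => Metric.infDist y S) v (q + s • v) := by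
  have hU := grad_norm_aux q v hv s hs
  have hL := grad_norm_aux (q + t • v) (-v) (by rwa [norm_neg]) (t - s) (by linarith)
  have e : q + t • v + (t - s) • (-v) = q + s • v := by module
  rw [e] at hL
  have nU : ‖q + s • v - q‖ = s := by simp [norm_smul, hv, abs_of_pos hs]
  have nL : ‖q + s • v - (q + t • v)‖ = t - s := by
    have : q + s • v - (q + t • v) = (t - s) • (-v) := by module
    rw [this, norm_smul, norm_neg, hv, Real.norm_of_nonneg (by linarith), mul_one]
  rw [hasGradientAt_iff_hasFDerivAt]
  rw [hasFDerivAt_iff_isLittleO] at hU hL ⊢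
  have hsum := hU.norm_left.add hL.norm_left
  refine Asymptotics.IsBigO.trans_isLittleO (Asymptotics.IsBigO.of_bound 1 ?_) hsum
  refine Filter.Eventually.of_forall fun y => ?_
  have a1 : Metric.infDist y S ≤ ‖y - q‖ := by
    rw [← dist_eq_norm]; exact Metric.infDist_le_dist_of_mem hq
  have a2 : t ≤ Metric.infDist y S + ‖y - (q + t • v)‖ := by
    rw [← dist_eq_norm, dist_comm, ← h2, h2]
    nth_rewrite 1 [← h2]
    exact Metric.infDist_le_infDist_add_dist
  simp only [nU, nL, h1, innerSL_apply_apply, InnerProductSpace.toDual_apply_apply, inner_neg_left,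
    Real.norm_eq_abs, one_mul]
  refine le_trans ?_ (le_abs_self _)
  generalize inner ℝ v (y - (q + s • v)) = c
  have b1 := le_abs_self (‖y - q‖ - s - c)
  have b2 := le_abs_self (‖y - (q + t • v)‖ - (t - s) - -c)
  have b3 := abs_nonneg (‖y - q‖ - s - c)
  have b4 := abs_nonneg (‖y - (q + t • v)‖ - (t - s) - -c)
  rw [abs_le]
  constructor <;> linarith

theorem stmt_13
    (L : ℝ) (hL : 0 < L)
    (x : ℝ → E2) (hx : ContDiff ℝ 2 x)
    (hper : ∀ θ, x (θ + L) = x θ)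
    (hinj : InjOn x (Ico 0 L))
    (hunit : ∀ θ, deriv x θ 0 ^ 2 + deriv x θ 1 ^ 2 = 1)
    (n : ℝ → E2)
    (hn : ∀ θ, n θ 0 = -(deriv x θ 1) ∧ n θ 1 = deriv x θ 0)
    (X : ℝ → ℝ → E2) (hX : ∀ s θ, X s θ = x θ + s • n θ)
    (δ : ℝ) (hδ : 0 < δ)
    (hinjX : InjOn (fun p : ℝ × ℝ => X p.1 p.2) (Ioo (-δ) δ ×ˢ Ico 0 L))
    (himg : (fun p : ℝ × ℝ => X p.1 p.2) '' (Ioo (-δ) δ ×ˢ (univ : Set ℝ)) =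
      {y : E2 | Metric.infDist y (Set.range x) < δ})
    (hdist : ∀ s θ : ℝ, |s| < δ → Metric.infDist (X s θ) (Set.range x) = |s|) :
    ∀ θ s : ℝ,
      (0 < s → s < δ →
        HasGradientAt (fun y : E2 => Metric.infDist y (Set.range x)) (n θ) (X s θ)) ∧
      (-δ < s → s < 0 →
        HasGradientAt (fun y : E2 => Metric.infDist y (Set.range x)) (-n θ) (X s θ)) := by
  have hnn : ∀ θ, ‖n θ‖ = 1 := by
    intro θ
    rw [EuclideanSpace.norm_eq, Fin.sum_univ_two, (hn θ).1, (hn θ).2]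
    simp only [Real.norm_eq_abs, sq_abs]
    rw [Real.sqrt_eq_one]
    linarith [hunit θ]
  intro θ s
  constructor
  · intro h0 h1
    rw [hX]
    have hd := hdist s θ (by rw [abs_of_pos h0]; exact h1)
    have hd2 := hdist ((s + δ) / 2) θ (by rw [abs_of_pos (by linarith)]; linarith)
    rw [hX, abs_of_pos (by linarith)] at hd hd2
    exact grad_dist_aux _ _ _ (mem_range_self θ) (hnn θ) s ((s + δ) / 2) h0 (by linarith) hd hd2
  · intro h1 h0
    have hd := hdist s θ (by rw [abs_of_neg h0]; linarith)
    have hd2 := hdist ((s - δ) / 2) θ (by rw [abs_of_neg (by linarith)]; linarith)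
    rw [hX, abs_of_neg (by linarith)] at hd hd2
    have e : ∀ r : ℝ, r • n θ = (-r) • (-n θ) := fun r => by module
    rw [hX]
    rw [e] at hd hd2 ⊢
    exact grad_dist_aux _ _ _ (mem_range_self θ) (by rw [norm_neg]; exact hnn θ) (-s)
      (-((s - δ) / 2)) (by linarith) (by linarith) hd hd2
end
end

section
/- Let x : ℝ → ℝ² be a C², L-periodic, unit-speed curve with normal n(θ) = (−x₂'(θ), x₁'(θ)), curvature γ(θ), X(s,θ) = x(θ) + s·n(θ) and J(s,θ) = 1 + sγ(θ), and let δ > 0 be small enough that X is a C¹ diffeomorphism from (−δ,δ)×(ℝ/LZ) onto V_δ. Let q be a twice continuously differentiable function on V_δ and set q̃(s,θ) = q(X(s,θ)). Then for all (s,θ) ∈ (−δ,δ)×ℝ: (Δq)(X(s,θ)) = (1/J(s,θ)) ∂_s( J(s,θ) ∂_s q̃(s,θ) ) + (1/J(s,θ)) ∂_θ( (1/J(s,θ)) ∂_θ q̃(s,θ) ), where Δq = ∂₁₁q + ∂₂₂q. -/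
open Set

noncomputable section

theorem stmt_16
    (L : ℝ) (hL : 0 < L)
    (x : ℝ → E2) (hx : ContDiff ℝ 2 x)
    (hper : ∀ θ, x (θ + L) = x θ)
    (hinj : InjOn x (Ico 0 L))
    (hunit : ∀ θ, deriv x θ 0 ^ 2 + deriv x θ 1 ^ 2 = 1)
    (n : ℝ → E2) (γ : ℝ → ℝ)
    (hn : ∀ θ, n θ 0 = -(deriv x θ 1) ∧ n θ 1 = deriv x θ 0)
    (hγ : ∀ θ, γ θ = deriv (deriv x) θ 0 * deriv x θ 1 - deriv x θ 0 * deriv (deriv x) θ 1)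
    (X : ℝ → ℝ → E2) (hX : ∀ s θ, X s θ = x θ + s • n θ)
    (J : ℝ → ℝ → ℝ) (hJ : ∀ s θ, J s θ = 1 + s * γ θ)
    -- δ is small enough that X is a C¹ diffeomorphism from (−δ,δ)×(ℝ/LZ) onto V_δ
    (δ : ℝ) (hδ : 0 < δ)
    (hinjX : InjOn (fun p : ℝ × ℝ => X p.1 p.2) (Ioo (-δ) δ ×ˢ Ico 0 L))
    (himg : (fun p : ℝ × ℝ => X p.1 p.2) '' (Ioo (-δ) δ ×ˢ (univ : Set ℝ)) =
      {y : E2 | Metric.infDist y (Set.range x) < δ})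
    (hdist : ∀ s θ : ℝ, |s| < δ → Metric.infDist (X s θ) (Set.range x) = |s|)
    (hJpos : ∀ s θ : ℝ, |s| < δ → 0 < J s θ)
    -- a C² function on V_δ, expressed in the geodesic coordinates
    (q : E2 → ℝ)
    (hq : ContDiffOn ℝ 2 q {y : E2 | Metric.infDist y (Set.range x) < δ})
    (qt : ℝ → ℝ → ℝ) (hqt : ∀ s θ, qt s θ = q (X s θ)) :
    ∀ s θ : ℝ, -δ < s → s < δ →
      pd 0 (pd 0 q) (X s θ) + pd 1 (pd 1 q) (X s θ) =
        (1 / J s θ) * deriv (fun t => J t θ * deriv (fun r => qt r θ) t) s +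
        (1 / J s θ) * deriv (fun w => (1 / J s w) * deriv (fun w' => qt s w') w) θ := by
  intro s θ hs1 hs2
  have hopen : IsOpen {y : E2 | Metric.infDist y (Set.range x) < δ} :=
    isOpen_lt (Metric.continuous_infDist_pt _) continuous_const
  have hXV : ∀ t w : ℝ, |t| < δ → ContDiffAt ℝ 2 q (X t w) := by
    intro t w ht
    refine hq.contDiffAt (hopen.mem_nhds ?_)
    show Metric.infDist (X t w) (Set.range x) < δ
    rw [hdist t w ht]; exact ht
  have hqd : ∀ t w : ℝ, |t| < δ → HasFDerivAt q (fderiv ℝ q (X t w)) (X t w) := fun t w ht =>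
    ((hXV t w ht).differentiableAt (by norm_num)).hasFDerivAt
  have hs : |s| < δ := abs_lt.2 ⟨hs1, hs2⟩
  have hD2 : HasFDerivAt (fderiv ℝ q) (fderiv ℝ (fderiv ℝ q) (X s θ)) (X s θ) :=
    (((hXV s θ hs).fderiv_right (m := 1) (by norm_num)).differentiableAt (by norm_num)).hasFDerivAt
  have hx1 : ∀ w, HasDerivAt x (deriv x w) w := fun w =>
    (hx.differentiable (by norm_num) w).hasDerivAt
  have hT1 : ContDiff ℝ 1 (deriv x) := by
    have : ContDiff ℝ (1 + 1) x := by simpa [one_add_one_eq_two] using hx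
    exact (contDiff_succ_iff_deriv.1 this).2.2
  have hx2 : ∀ w, HasDerivAt (deriv x) (deriv (deriv x) w) w := fun w =>
    (hT1.differentiable (by norm_num) w).hasDerivAt
  have hc : ∀ (i : Fin 2) w, HasDerivAt (fun w => deriv x w i) (deriv (deriv x) w i) w := by
    intro i w
    exact (EuclideanSpace.proj (𝕜 := ℝ) i).hasFDerivAt.comp_hasDerivAt w (hx2 w)
  have hort : ∀ w, deriv x w 0 * deriv (deriv x) w 0 + deriv x w 1 * deriv (deriv x) w 1 = 0 := by
    intro w
    have h1 := ((hc 0 w).pow 2).add ((hc 1 w).pow 2)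
    have h2 : HasDerivAt (fun w => deriv x w 0 ^ 2 + deriv x w 1 ^ 2) 0 w := by
      simp only [hunit]; exact hasDerivAt_const _ _
    have h3 := h1.unique h2
    norm_num at h3
    linarith
  have hnvec : ∀ w, n w = (-(deriv x w 1)) • EuclideanSpace.single (0 : Fin 2) (1 : ℝ)
      + (deriv x w 0) • EuclideanSpace.single (1 : Fin 2) (1 : ℝ) := by
    intro w
    ext i
    fin_cases i <;> simp [hn]
  have hTvec : ∀ w, deriv x w = (deriv x w 0) • EuclideanSpace.single (0 : Fin 2) (1 : ℝ)
      + (deriv x w 1) • EuclideanSpace.single (1 : Fin 2) (1 : ℝ) := by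
    intro w
    ext i
    fin_cases i <;> simp
  have hT' : ∀ w, deriv (deriv x) w = (-γ w) • n w := by
    intro w
    have h1 := hort w
    have h2 := hunit w
    ext i
    fin_cases i
    · simp [hn, hγ]
      linear_combination (-(deriv (deriv x) w 0)) * h2 + deriv x w 0 * h1
    · simp [hn, hγ]
      linear_combination (-(deriv (deriv x) w 1)) * h2 + deriv x w 1 * h1
  have hn' : ∀ w, HasDerivAt n (γ w • deriv x w) w := by
    intro w
    have h0 := ((hc 1 w).neg.smul_const (EuclideanSpace.single (0 : Fin 2) (1 : ℝ))).add
      ((hc 0 w).smul_const (EuclideanSpace.single (1 : Fin 2) (1 : ℝ)))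
    have h1 := hort w
    have h2 := hunit w
    have he : n = (fun w => (-(deriv x w 1)) • EuclideanSpace.single (0 : Fin 2) (1 : ℝ))
      + (fun w => (deriv x w 0) • EuclideanSpace.single (1 : Fin 2) (1 : ℝ)) := funext hnvec
    rw [he]
    refine h0.congr_deriv ?_
    ext i
    fin_cases i
    · simp [hT', hn]
    · simp [hT', hn]
  have hXs : ∀ t w, HasDerivAt (fun r => X r w) (n w) t := by
    intro t w
    simp only [hX]
    simpa using ((hasDerivAt_id t).smul_const (n w)).const_add (x w)
  have hXw : ∀ t w, HasDerivAt (fun r => X t r) (J t w • deriv x w) w := by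
    intro t w
    simp only [hX]
    refine ((hx1 w).add ((hn' w).const_smul t)).congr_deriv ?_
    rw [hJ, add_smul, one_smul, smul_smul]
  have hqs : ∀ t w, |t| < δ → deriv (fun r => qt r w) t = fderiv ℝ q (X t w) (n w) := by
    intro t w ht
    simp only [hqt]
    exact ((hqd t w ht).comp_hasDerivAt t (hXs t w)).deriv
  have hqw : ∀ w, (1 / J s w) * deriv (fun r => qt s r) w = fderiv ℝ q (X s w) (deriv x w) := by
    intro w
    have h := ((hqd s w hs).comp_hasDerivAt w (hXw s w)).deriv
    have hJ0 := (hJpos s w hs).ne'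
    simp only [hqt]
    change deriv (fun r => q (X s r)) w = _ at h
    rw [h, map_smul, smul_eq_mul]
    field_simp
  have hA : HasDerivAt (fun t => J t θ * deriv (fun r => qt r θ) t)
      (γ θ * fderiv ℝ q (X s θ) (n θ)
        + J s θ * fderiv ℝ (fderiv ℝ q) (X s θ) (n θ) (n θ)) s := by
    have hJd : HasDerivAt (fun t => J t θ) (γ θ) s := by
      simp only [hJ]
      simpa using ((hasDerivAt_id s).mul_const (γ θ)).const_add 1
    have h1 : HasDerivAt (fun t => fderiv ℝ q (X t θ)) (fderiv ℝ (fderiv ℝ q) (X s θ) (n θ)) s :=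
      hD2.comp_hasDerivAt s (hXs s θ)
    have h2 := hJd.mul (h1.clm_apply (hasDerivAt_const s (n θ)))
    simp only [map_zero, add_zero] at h2
    refine h2.congr_of_eventuallyEq ?_
    filter_upwards [Ioo_mem_nhds hs1 hs2] with t ht
    simp [hqs t θ (abs_lt.2 ht)]
  have hB : HasDerivAt (fun w => (1 / J s w) * deriv (fun w' => qt s w') w)
      (J s θ * fderiv ℝ (fderiv ℝ q) (X s θ) (deriv x θ) (deriv x θ)
        - γ θ * fderiv ℝ q (X s θ) (n θ)) θ := by
    simp only [hqw]
    have h1 : HasDerivAt (fun w => fderiv ℝ q (X s w))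
        (fderiv ℝ (fderiv ℝ q) (X s θ) (J s θ • deriv x θ)) θ :=
      hD2.comp_hasDerivAt θ (hXw s θ)
    refine (h1.clm_apply (hx2 θ)).congr_deriv ?_
    rw [hT' θ]
    simp
    ring
  have hpd : ∀ i, pd i (pd i q) (X s θ) = fderiv ℝ (fderiv ℝ q) (X s θ)
      (EuclideanSpace.single i 1) (EuclideanSpace.single i 1) := by
    intro i
    have h := (hD2.clm_apply
      (hasFDerivAt_const (EuclideanSpace.single i (1 : ℝ) : E2) (X s θ))).fderiv
    unfold pd
    rw [h]
    simp
  rw [hA.deriv, hB.deriv, hpd, hpd]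
  have hJ0 := (hJpos s θ hs).ne'
  have h2 := hunit θ
  generalize fderiv ℝ (fderiv ℝ q) (X s θ) = B at *
  have key : B (n θ) (n θ) + B (deriv x θ) (deriv x θ)
      = B (EuclideanSpace.single 0 1) (EuclideanSpace.single 0 1)
        + B (EuclideanSpace.single 1 1) (EuclideanSpace.single 1 1) := by
    have e1 := hnvec θ
    have e2 := hTvec θ
    generalize deriv x θ 0 = a at *
    generalize deriv x θ 1 = b at *
    rw [e1, e2]
    simp only [map_add, map_smul, ContinuousLinearMap.add_apply, ContinuousLinearMap.smul_apply,
      smul_eq_mul]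
    linear_combination (B (EuclideanSpace.single 0 1) (EuclideanSpace.single 0 1)
        + B (EuclideanSpace.single 1 1) (EuclideanSpace.single 1 1)) * h2
  rw [← key]
  field_simp
  ring
end
end

section
/- Let x : ℝ → ℝ² be a C², L-periodic, unit-speed curve with tangent τ(θ), normal n(θ) = (−x₂'(θ), x₁'(θ)) and curvature γ(θ) = x₁''(θ)x₂'(θ) − x₁'(θ)x₂''(θ). Let u be a continuously differentiable vector field defined on an open neighborhood of the image of the curve such that u(x(θ))·n(θ) = 0 for every θ. Then for every θ: Σ_{i,j=1}^2 ∂_j(u_i u_j)(x(θ)) n_i(θ) = −γ(θ) ( u(x(θ))·τ(θ) )². -/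
open Set

noncomputable section

theorem stmt_18
    (L : ℝ) (hL : 0 < L)
    (x : ℝ → E2) (hx : ContDiff ℝ 2 x)
    (hper : ∀ θ, x (θ + L) = x θ)
    (hunit : ∀ θ, deriv x θ 0 ^ 2 + deriv x θ 1 ^ 2 = 1)
    (τ n : ℝ → E2) (γ : ℝ → ℝ)
    (hτ : ∀ θ, τ θ = deriv x θ)
    (hn : ∀ θ, n θ 0 = -(deriv x θ 1) ∧ n θ 1 = deriv x θ 0)
    (hγ : ∀ θ, γ θ = deriv (deriv x) θ 0 * deriv x θ 1 - deriv x θ 0 * deriv (deriv x) θ 1)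
    -- a C¹ vector field on an open neighborhood of the curve, tangent to the curve
    (U : Set E2) (hU : IsOpen U) (hΓU : Set.range x ⊆ U)
    (u : E2 → E2) (hu : ContDiffOn ℝ 1 u U)
    (htan : ∀ θ, u (x θ) 0 * n θ 0 + u (x θ) 1 * n θ 1 = 0) :
    ∀ θ : ℝ,
      (pd 0 (fun y => u y 0 * u y 0) (x θ) + pd 1 (fun y => u y 0 * u y 1) (x θ)) * n θ 0 +
      (pd 0 (fun y => u y 1 * u y 0) (x θ) + pd 1 (fun y => u y 1 * u y 1) (x θ)) * n θ 1 =
        -(γ θ) * (u (x θ) 0 * τ θ 0 + u (x θ) 1 * τ θ 1) ^ 2 := by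
  intro θ
  have hud : DifferentiableAt ℝ u (x θ) :=
    (hu.differentiableOn one_ne_zero).differentiableAt (hU.mem_nhds (hΓU ⟨θ, rfl⟩))
  have hxd : HasDerivAt x (deriv x θ) θ :=
    ((hx.differentiable two_ne_zero) θ).hasDerivAt
  have hx1 : ContDiff ℝ 1 (deriv x) := by
    have h2 : ContDiff ℝ (1 + 1) x := by
      rw [one_add_one_eq_two]; exact hx
    exact (contDiff_succ_iff_deriv.1 h2).2.2
  have hxdd : HasDerivAt (deriv x) (deriv (deriv x) θ) θ :=
    ((hx1.differentiable one_ne_zero) θ).hasDerivAt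
  have hc : ∀ i : Fin 2, HasDerivAt (fun t => deriv x t i) (deriv (deriv x) θ i) θ := fun i =>
    (EuclideanSpace.proj i : E2 →L[ℝ] ℝ).hasFDerivAt.comp_hasDerivAt θ hxdd
  have hF : ∀ i : Fin 2, HasFDerivAt (fun y => u y i)
      ((EuclideanSpace.proj i : E2 →L[ℝ] ℝ).comp (fderiv ℝ u (x θ))) (x θ) :=
    fun i => (EuclideanSpace.proj i : E2 →L[ℝ] ℝ).hasFDerivAt.comp (x θ)
      hud.hasFDerivAt
  generalize hD : (fun i : Fin 2 =>
    (EuclideanSpace.proj i : E2 →L[ℝ] ℝ).comp (fderiv ℝ u (x θ))) = D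
  have hF' : ∀ i : Fin 2, HasFDerivAt (fun y => u y i) (D i) (x θ) := by
    subst hD; exact hF
  have hpd : ∀ i j k : Fin 2, pd k (fun y => u y i * u y j) (x θ) =
      u (x θ) i * D j (EuclideanSpace.single k 1) + u (x θ) j * D i (EuclideanSpace.single k 1) := by
    intro i j k
    unfold pd
    rw [((hF' i).fun_mul (hF' j)).fderiv]
    simp
  have hdec : deriv x θ = deriv x θ 0 • EuclideanSpace.single (0 : Fin 2) (1 : ℝ)
      + deriv x θ 1 • EuclideanSpace.single (1 : Fin 2) (1 : ℝ) := by
    ext i; fin_cases i <;> simp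
  have hDx : ∀ i : Fin 2, D i (deriv x θ) = deriv x θ 0 * D i (EuclideanSpace.single 0 1)
      + deriv x θ 1 * D i (EuclideanSpace.single 1 1) := by
    intro i
    conv_lhs => rw [hdec]
    simp only [map_add, map_smul, smul_eq_mul]
  have hux : ∀ i : Fin 2, HasDerivAt (fun t => u (x t) i) (D i (deriv x θ)) θ := fun i =>
    (hF' i).comp_hasDerivAt θ hxd
  have hz : (fun t => u (x t) 0 * (-(deriv x t 1)) + u (x t) 1 * deriv x t 0) = fun _ => (0:ℝ) := by
    funext t
    have := htan t
    rwa [(hn t).1, (hn t).2] at this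
  have h1 := ((hux 0).fun_mul (hc 1).fun_neg).fun_add ((hux 1).fun_mul (hc 0))
  rw [hz] at h1
  have h2 := h1.unique (hasDerivAt_const θ (0:ℝ))
  have h3 := congrFun hz θ
  have h4 := hunit θ
  simp only [hpd, (hn θ).1, (hn θ).2, hτ, hγ]
  rw [hDx, hDx] at h2
  simp only at h3
  generalize D 0 (EuclideanSpace.single 0 1) = d00 at *
  generalize D 0 (EuclideanSpace.single 1 1) = d01 at *
  generalize D 1 (EuclideanSpace.single 0 1) = d10 at *
  generalize D 1 (EuclideanSpace.single 1 1) = d11 at *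
  generalize deriv (deriv x) θ 0 = P at *
  generalize deriv (deriv x) θ 1 = Q at *
  generalize deriv x θ 0 = p at *
  generalize deriv x θ 1 = q at *
  generalize u (x θ) 0 = a at *
  generalize u (x θ) 1 = b at *
  clear * - h2 h3 h4
  obtain ⟨s, hs⟩ : ∃ s, s = a * p + b * q := ⟨_, rfl⟩
  have ha : a = s * p := by rw [hs]; linear_combination (-a) * h4 - q * h3
  have hb : b = s * q := by rw [hs]; linear_combination (-b) * h4 + p * h3
  rw [← hs]
  subst ha hb
  linear_combination s * h2
end
end

section
/- Let Ω ⊂ ℝ² be a bounded open set, α ∈ (0,1), and χ ∈ C_c^∞(Ω). Then there exist positive constants C and D, depending only on χ, α and Ω, with the following property: for every matrix-valued function G = (G_{ij}) that is twice continuously differentiable on an open neighborhood of the closure of Ω and every P that is twice continuously differentiable on an open neighborhood of the closure of Ω and satisfies −ΔP = Σ_{i,j=1}^2 ∂_i∂_j G_{ij} at every point of Ω, one has ‖χP‖_{C^{0,α}(Ω)} ≤ C ‖G‖_{C^{0,α}(Ω)} + D ‖P‖_{L^∞(Ω)}. -/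
open MeasureTheory Set

noncomputable section

/-- `f` is α-Hölder on `S` with constant `M`. -/
def IsHolderOn (α M : ℝ) (S : Set E2) (f : E2 → ℝ) : Prop :=
  ∀ y ∈ S, ∀ z ∈ S, |f y - f z| ≤ M * dist y z ^ α

/-- The `C^{0,α}` norm on `S`: sup norm plus least Hölder constant. -/
noncomputable def holderNorm (α : ℝ) (S : Set E2) (f : E2 → ℝ) : ℝ :=
  (⨆ y ∈ S, |f y|) + sInf {M : ℝ | 0 ≤ M ∧ IsHolderOn α M S f}

open Filter Topology Metric

/-- Mean value inequality with a real comparison function. -/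
lemma abs_sub_le_of_deriv {f f' b b' : ℝ → ℝ} {s t : ℝ} (hst : s ≤ t)
    (hf : ContinuousOn f (Icc s t)) (hb : ContinuousOn b (Icc s t))
    (hf' : ∀ r ∈ Ioo s t, HasDerivAt f (f' r) r) (hb' : ∀ r ∈ Ioo s t, HasDerivAt b (b' r) r)
    (h : ∀ r ∈ Ioo s t, |f' r| ≤ b' r) : |f t - f s| ≤ b t - b s := by
  have key : ∀ ε : ℝ, |ε| = 1 → ε * (f t - f s) ≤ b t - b s := by
    intro ε hε
    have hm : MonotoneOn (fun r => b r - ε * f r) (Icc s t) := by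
      apply monotoneOn_of_deriv_nonneg (convex_Icc s t)
      · exact hb.sub (continuousOn_const.mul hf)
      · rw [interior_Icc]
        intro r hr
        exact ((hb' r hr).sub ((hf' r hr).const_mul ε)).differentiableAt.differentiableWithinAt
      · rw [interior_Icc]
        intro r hr
        have h1 : HasDerivAt (fun r => b r - ε * f r) (b' r - ε * f' r) r :=
          (hb' r hr).sub ((hf' r hr).const_mul ε)
        rw [h1.deriv]
        have h2 : ε * f' r ≤ |f' r| := by
          calc ε * f' r ≤ |ε * f' r| := le_abs_self _
            _ = |f' r| := by rw [abs_mul, hε, one_mul]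
        linarith [h r hr]
    have := hm (left_mem_Icc.2 hst) (right_mem_Icc.2 hst) hst
    simp only at this
    linarith
  rw [abs_le]
  have h1 := key 1 (by simp)
  have h2 := key (-1) (by simp)
  constructor <;> linarith

lemma exists_kernel : ∃ η Ψ : E2 → ℝ, ContDiff ℝ (⊤ : ℕ∞) η ∧ ContDiff ℝ (⊤ : ℕ∞) Ψ ∧
    tsupport η ⊆ closedBall 0 1 ∧ tsupport Ψ ⊆ closedBall 0 1 ∧
    (∀ i z, pd i Ψ z = z i * η z) ∧ 0 < ∫ z, η z := by
  set g : ℝ → ℝ := fun t => Real.smoothTransition (1 - t) with hg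
  have hgs : ContDiff ℝ (⊤ : ℕ∞) g :=
    Real.smoothTransition.contDiff.comp (contDiff_const.sub contDiff_id)
  have hg0 : ∀ t, 1 ≤ t → g t = 0 := fun t ht =>
    Real.smoothTransition.zero_of_nonpos (by linarith)
  set F : ℝ → ℝ := fun t => ∫ s in (1:ℝ)..t, g s / 2 with hF
  have hFd : ∀ t, HasDerivAt F (g t / 2) t := fun t =>
    (hgs.continuous.div_const 2).integral_hasStrictDerivAt 1 t |>.hasDerivAt
  have hFs : ContDiff ℝ (⊤ : ℕ∞) F := by
    rw [contDiff_infty_iff_deriv]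
    refine ⟨fun t => (hFd t).differentiableAt, ?_⟩
    have : deriv F = fun t => g t / 2 := funext fun t => (hFd t).deriv
    rw [this]
    exact hgs.div_const 2
  have hF0 : ∀ t, 1 ≤ t → F t = 0 := by
    intro t ht
    rw [hF]
    apply intervalIntegral.integral_zero_ae
    refine Eventually.of_forall fun s hs => ?_
    rw [uIoc_of_le ht] at hs
    rw [hg0 s hs.1.le, zero_div]
  have hsupp : ∀ q : ℝ → ℝ, (∀ t, 1 ≤ t → q t = 0) →
      tsupport (fun z : E2 => q (‖z‖ ^ 2)) ⊆ closedBall 0 1 := by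
    intro q hq
    apply closure_minimal _ isClosed_closedBall
    intro z hz
    by_contra hn
    apply hz
    simp only [mem_closedBall, dist_zero_right, not_le] at hn
    exact hq _ (by nlinarith)
  have hn : ContDiff ℝ (⊤ : ℕ∞) (fun z : E2 => ‖z‖ ^ 2) := contDiff_norm_sq ℝ
  refine ⟨fun z => g (‖z‖ ^ 2), fun z => F (‖z‖ ^ 2), hgs.comp hn, hFs.comp hn,
    hsupp g hg0, hsupp F hF0, ?_, ?_⟩
  · intro i z
    have h1 : HasFDerivAt (fun z : E2 => ‖z‖ ^ 2) (2 • (innerSL ℝ z)) z :=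
      (hasStrictFDerivAt_norm_sq z).hasFDerivAt
    have h2 := (hFd (‖z‖ ^ 2)).comp_hasFDerivAt z h1
    have h3 : HasFDerivAt (fun z : E2 => F (‖z‖ ^ 2)) ((g (‖z‖^2) / 2) • (2 • (innerSL ℝ z))) z := h2
    rw [pd, h3.fderiv]
    simp [EuclideanSpace.inner_single_right]
    ring
  · apply Continuous.integral_pos_of_hasCompactSupport_nonneg_nonzero (x := 0)
    · exact (hgs.comp hn).continuous
    · exact HasCompactSupport.of_support_subset_isCompact (isCompact_closedBall 0 1)
        ((subset_tsupport _).trans (hsupp g hg0))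
    · intro z; exact Real.smoothTransition.nonneg _
    · simp [hg]

lemma eq_zero_of_tsupp {k : E2 → ℝ} (hk : tsupport k ⊆ closedBall 0 1) {z : E2}
    (hz : 1 < ‖z‖) : k z = 0 := by
  by_contra h
  have := hk (subset_tsupport _ h)
  simp only [mem_closedBall, dist_zero_right] at this
  linarith

lemma hcs_of_tsupp {k : E2 → ℝ} (hk : tsupport k ⊆ closedBall 0 1) : HasCompactSupport k :=
  HasCompactSupport.of_support_subset_isCompact (isCompact_closedBall 0 1)
    ((subset_tsupport _).trans hk)

lemma contDiff_pd {n : ℕ} {f : E2 → ℝ} (i : Fin 2) (hf : ContDiff ℝ (n + 1) f) :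
    ContDiff ℝ n (pd i f) :=
  (hf.fderiv_right (m := n) le_rfl).clm_apply contDiff_const

lemma contDiff_pd_one {f : E2 → ℝ} (i : Fin 2) (hf : ContDiff ℝ 2 f) : ContDiff ℝ 1 (pd i f) := by
  have := contDiff_pd (n := 1) (f := f) i (by
    rw [Nat.cast_one, one_add_one_eq_two]; exact hf)
  simpa using this

lemma tsupport_pd (i : Fin 2) (f : E2 → ℝ) : tsupport (pd i f) ⊆ tsupport f :=
  tsupport_fderiv_apply_subset ℝ _

lemma cont_scale {f : E2 → ℝ} (hf : Continuous f) (x : E2) (r : ℝ) :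
    Continuous (fun z : E2 => f (x - r • z)) := by fun_prop

lemma integrable_mul_k {f k : E2 → ℝ} (hf : Continuous f) (hk : Continuous k)
    (hks : HasCompactSupport k) : Integrable (fun z => f z * k z) :=
  (hf.mul hk).integrable_of_hasCompactSupport hks.mul_left

lemma pd_scale {f : E2 → ℝ} (hf : Differentiable ℝ f) (i : Fin 2) (x : E2) (r : ℝ) (z : E2) :
    pd i (fun z => f (x - r • z)) z = -r * pd i f (x - r • z) := by
  have h1 : HasFDerivAt (fun z : E2 => x - r • z) (-(r • ContinuousLinearMap.id ℝ E2)) z :=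
    ((hasFDerivAt_id z).const_smul r).const_sub x
  have h2 := (hf (x - r • z)).hasFDerivAt.comp z h1
  have h3 : HasFDerivAt (fun z => f (x - r • z))
    ((fderiv ℝ f (x - r • z)).comp (-(r • ContinuousLinearMap.id ℝ E2))) z := h2
  rw [pd, h3.fderiv]
  simp [pd]

lemma by_parts {f k : E2 → ℝ} (hf : ContDiff ℝ 1 f) (hk : ContDiff ℝ 1 k)
    (hks : tsupport k ⊆ closedBall 0 1) (i : Fin 2) (x : E2) (r : ℝ) :
    r * ∫ z, pd i f (x - r • z) * k z = ∫ z, f (x - r • z) * pd i k z := by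
  have hfd : Differentiable ℝ f := hf.differentiable (by simp)
  have hf0 : Continuous (pd i f) := (contDiff_pd (n := 0) i (by simpa using hf)).continuous
  have hk0 : Continuous (pd i k) := (contDiff_pd (n := 0) i (by simpa using hk)).continuous
  have e : ∀ z, fderiv ℝ (fun z => f (x - r • z)) z (EuclideanSpace.single i 1)
      = -r * pd i f (x - r • z) := fun z => pd_scale hfd i x r z
  have hc := hcs_of_tsupp hks
  have := integral_mul_fderiv_eq_neg_fderiv_mul_of_integrable (μ := (volume : Measure E2))
    (f := fun z => f (x - r • z)) (g := k) (v := EuclideanSpace.single i 1) ?_ ?_ ?_ ?_ ?_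
  · rw [show (∫ z, f (x - r • z) * pd i k z) = _ from this, ← integral_neg, ← integral_const_mul]
    congr 1; ext z; rw [e]; ring
  · simp_rw [e]
    exact integrable_mul_k (continuous_const.mul (cont_scale hf0 x r)) hk.continuous hc
  · exact integrable_mul_k (cont_scale hf.continuous x r) hk0
      (hcs_of_tsupp ((tsupport_pd i k).trans hks))
  · exact integrable_mul_k (cont_scale hf.continuous x r) hk.continuous hc
  · intro z _; exact (hfd.comp (by fun_prop : Differentiable ℝ (fun z : E2 => x - r • z))) z
  · intro z _; exact hk.differentiable (by simp) z

lemma integral_pd_eq_zero {k : E2 → ℝ} (hk : ContDiff ℝ 1 k)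
    (hks : tsupport k ⊆ closedBall 0 1) (i : Fin 2) : ∫ z, pd i k z = 0 := by
  have := by_parts (f := fun _ => 1) contDiff_const hk hks i 0 0
  simpa using this.symm

/-- Volume of the ball of radius two. -/
def VV : ℝ := volume.real (closedBall (0 : E2) 2)

lemma VV_nonneg : 0 ≤ VV := measureReal_nonneg

lemma integral_bound {q : E2 → ℝ} {N : ℝ} (h0 : ∀ z, 2 < ‖z‖ → q z = 0)
    (hN : ∀ z, ‖z‖ ≤ 2 → |q z| ≤ N) : |∫ z, q z| ≤ N * VV := by
  rw [← setIntegral_eq_integral_of_forall_compl_eq_zero (s := closedBall (0 : E2) 2)]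
  · have hfin : volume (closedBall (0 : E2) 2) < ⊤ := measure_closedBall_lt_top
    have hb : ∀ z ∈ closedBall (0 : E2) 2, ‖q z‖ ≤ N := fun z hz =>
      hN z (by rwa [mem_closedBall, dist_zero_right] at hz)
    exact norm_setIntegral_le_of_norm_le_const hfin hb
  · intro z hz
    rw [mem_closedBall, dist_zero_right, not_le] at hz
    exact h0 z hz

/-- Cancellation bound. -/
lemma bound_one {f k : E2 → ℝ} (hf : Continuous f) (hk : Continuous k)
    (hks : tsupport k ⊆ closedBall 0 1) (hk0 : ∫ z, k z = 0) {L N : ℝ}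
    (hL : ∀ z, |k z| ≤ L) (x : E2) (r c : ℝ) (hN : ∀ z : E2, ‖z‖ ≤ 2 → |f (x - r • z) - c| ≤ N) :
    |∫ z, f (x - r • z) * k z| ≤ N * L * VV := by
  have hN0 : 0 ≤ N := (abs_nonneg _).trans (hN 0 (by simp))
  have e : ∫ z, f (x - r • z) * k z = ∫ z, (f (x - r • z) - c) * k z := by
    simp_rw [sub_mul]
    rw [integral_sub, integral_const_mul, hk0, mul_zero, sub_zero]
    · exact integrable_mul_k (cont_scale hf x r) hk (hcs_of_tsupp hks)
    · exact integrable_mul_k continuous_const hk (hcs_of_tsupp hks)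
  rw [e]
  apply integral_bound
  · intro z hz; rw [eq_zero_of_tsupp hks (by linarith), mul_zero]
  · intro z hz
    rw [abs_mul]
    exact mul_le_mul (hN z hz) (hL z) (abs_nonneg _) hN0

/-- Translation bound. -/
lemma bound_two {f k : E2 → ℝ} (hf : Continuous f) (hk : Continuous k)
    (hks : tsupport k ⊆ closedBall 0 1) {L N : ℝ}
    (hL : ∀ z w, |k z - k w| ≤ L * dist z w) (x y : E2) (r c : ℝ) (hr : 0 < r) (hxy : dist x y ≤ r)
    (hN : ∀ z : E2, ‖z‖ ≤ 2 → |f (x - r • z) - c| ≤ N) :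
    |(∫ z, f (x - r • z) * k z) - ∫ z, f (y - r • z) * k z| ≤ N * (L * (dist x y / r)) * VV := by
  have hN0 : 0 ≤ N := (abs_nonneg _).trans (hN 0 (by simp))
  set h : E2 := r⁻¹ • (x - y) with hh
  have hnorm : ‖h‖ = dist x y / r := by
    rw [hh, norm_smul, Real.norm_eq_abs, abs_of_pos (inv_pos.2 hr), dist_eq_norm]; ring
  have hle : ‖h‖ ≤ 1 := by rw [hnorm]; exact (div_le_one hr).2 hxy
  have hrh : r • h = x - y := by rw [hh, smul_smul, mul_inv_cancel₀ hr.ne', one_smul]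
  have i1 : Integrable (fun z => (f (x - r • z) - c) * k z) :=
    integrable_mul_k ((cont_scale hf x r).sub continuous_const) hk (hcs_of_tsupp hks)
  have i2 : Integrable (fun z => (f (y - r • z) - c) * k z) :=
    integrable_mul_k ((cont_scale hf y r).sub continuous_const) hk (hcs_of_tsupp hks)
  have ic : Integrable (fun z => c * k z) :=
    integrable_mul_k continuous_const hk (hcs_of_tsupp hks)
  have e1 : ∀ w, ∫ z, f (w - r • z) * k z = (∫ z, (f (w - r • z) - c) * k z) + ∫ z, c * k z := by
    intro w
    have iw : Integrable (fun z => (f (w - r • z) - c) * k z) :=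
      integrable_mul_k ((cont_scale hf w r).sub continuous_const) hk (hcs_of_tsupp hks)
    rw [← integral_add iw ic]
    congr 1; ext z; ring
  have e2 : ∫ z, (f (y - r • z) - c) * k z = ∫ z, (f (x - r • z) - c) * k (z - h) := by
    rw [← integral_sub_right_eq_self (fun z => (f (y - r • z) - c) * k z) h]
    congr 1; ext z
    rw [smul_sub, hrh, show y - (r • z - (x - y)) = x - r • z by abel]
  have i3 : Integrable (fun z => (f (x - r • z) - c) * k (z - h)) := by
    have := i2.comp_sub_right h
    convert this using 1
    ext z
    rw [smul_sub, hrh, show y - (r • z - (x - y)) = x - r • z by abel]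
  rw [e1 x, e1 y, add_sub_add_right_eq_sub, e2, ← integral_sub i1 i3, ← hnorm]
  apply integral_bound
  · intro z hz
    have : 1 < ‖z - h‖ := by
      have := norm_sub_norm_le z h
      linarith
    rw [eq_zero_of_tsupp hks (by linarith : 1 < ‖z‖), eq_zero_of_tsupp hks this]; ring
  · intro z hz
    rw [← mul_sub, abs_mul]
    refine mul_le_mul (hN z hz) ?_ (abs_nonneg _) hN0
    have := hL z (z - h)
    rwa [dist_eq_norm, sub_sub_cancel] at this

/-- Derivative of the averages. -/
lemma hasDerivAt_avg {P η Ψ : E2 → ℝ} (hP : ContDiff ℝ 2 P) (hPc : HasCompactSupport P)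
    (hη : ContDiff ℝ (⊤ : ℕ∞) η) (hΨ : ContDiff ℝ (⊤ : ℕ∞) Ψ) (hηs : tsupport η ⊆ closedBall 0 1)
    (hΨs : tsupport Ψ ⊆ closedBall 0 1) (hΨη : ∀ i z, pd i Ψ z = z i * η z) (x : E2) (r : ℝ) :
    HasDerivAt (fun r => ∫ z, P (x - r • z) * η z)
      (-r * ∑ i, ∫ z, pd i (pd i P) (x - r • z) * Ψ z) r := by
  have hP1 : ContDiff ℝ 1 P := hP.of_le (by norm_num)
  have hpd : ∀ i, ContDiff ℝ 1 (pd i P) := fun i => contDiff_pd_one i hP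
  have hΨ1 : ContDiff ℝ 1 Ψ := hΨ.of_le (by exact_mod_cast le_top)
  have hη1 : Continuous η := hη.continuous
  obtain ⟨B, hB⟩ := (hPc.fderiv ℝ).exists_bound_of_continuous (hP.continuous_fderiv (by simp))
  have hd : ∀ (z : E2) (r : ℝ), HasDerivAt (fun r => P (x - r • z) * η z)
      (fderiv ℝ P (x - r • z) (-z) * η z) r := by
    intro z r
    have h1 : HasDerivAt (fun r : ℝ => x - r • z) (-z) r := by
      simpa using ((hasDerivAt_id r).smul_const z).const_sub x
    exact (((hP1.differentiable (by simp)) (x - r • z)).hasFDerivAt.comp_hasDerivAt r h1).mul_const _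
  have main := hasDerivAt_integral_of_dominated_loc_of_deriv_le (μ := (volume : Measure E2))
    (F := fun r z => P (x - r • z) * η z)
    (F' := fun r z => fderiv ℝ P (x - r • z) (-z) * η z) (x₀ := r) (s := univ)
    (bound := fun z => (B * ‖z‖) * |η z|) univ_mem
    (Eventually.of_forall fun r => ((cont_scale hP.continuous x r).mul hη1).aestronglyMeasurable)
    (integrable_mul_k (cont_scale hP.continuous x r) hη1 (hcs_of_tsupp hηs))
    (by
      have : Continuous (fderiv ℝ P) := hP.continuous_fderiv (by simp)
      exact Continuous.aestronglyMeasurable (by fun_prop))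
    (Eventually.of_forall fun z r _ => by
      rw [norm_mul]
      refine mul_le_mul_of_nonneg_right ?_ (norm_nonneg _)
      refine (ContinuousLinearMap.le_opNorm _ _).trans ?_
      rw [norm_neg]
      exact mul_le_mul_of_nonneg_right (hB _) (norm_nonneg _))
    (by
      apply integrable_mul_k (by fun_prop) hη1.abs
      exact (hcs_of_tsupp hηs).comp_left abs_zero)
    (Eventually.of_forall fun z r _ => hd z r)
  refine main.2.congr_deriv ?_
  have e : ∀ z : E2, fderiv ℝ P (x - r • z) (-z) * η z
      = - ∑ i, pd i P (x - r • z) * pd i Ψ z := by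
    intro z
    have hz : z = ∑ i, z i • (EuclideanSpace.single i 1 : E2) := by
      ext j; fin_cases j <;> simp
    have h1 : fderiv ℝ P (x - r • z) z = ∑ i, z i * pd i P (x - r • z) := by
      have h2 := congrArg (fderiv ℝ P (x - r • z)) hz
      rw [h2, map_sum]
      simp only [map_smul, smul_eq_mul, pd]
    rw [map_neg, h1]
    simp only [Fin.sum_univ_two, hΨη]
    ring
  refine (integral_congr_ae (Eventually.of_forall e)).trans ?_
  rw [integral_neg, integral_finsetSum]
  · rw [neg_mul, Finset.mul_sum]
    congr 1
    exact Finset.sum_congr rfl fun i _ => (by_parts (hpd i) hΨ1 hΨs i x r).symm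
  · intro i _
    refine integrable_mul_k (cont_scale (hpd i).continuous x r) ?_
      (hcs_of_tsupp ((tsupport_pd i Ψ).trans hΨs))
    exact (contDiff_pd (n := 0) i (by simpa using hΨ1)).continuous

lemma lip_bound {k : E2 → ℝ} (hk : ContDiff ℝ 1 k) (hks : tsupport k ⊆ closedBall 0 1) :
    ∃ L : ℝ, 0 ≤ L ∧ (∀ z, |k z| ≤ L) ∧ ∀ z w, |k z - k w| ≤ L * dist z w := by
  have hc := hcs_of_tsupp hks
  obtain ⟨B, hB⟩ := hc.exists_bound_of_continuous hk.continuous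
  obtain ⟨C, hC⟩ := ContDiff.lipschitzWith_of_hasCompactSupport hc hk (by simp)
  refine ⟨max B C, le_max_of_le_right C.2, fun z => (hB z).trans (le_max_left _ _), ?_⟩
  intro z w
  have := hC.dist_le_mul z w
  rw [Real.dist_eq] at this
  exact this.trans (mul_le_mul_of_nonneg_right (le_max_right _ _) dist_nonneg)

/-- The equation, tested against the scaled kernel. -/
lemma deriv_formula {P Ψ : E2 → ℝ} {G : Fin 2 → Fin 2 → E2 → ℝ} (hP : ContDiff ℝ 2 P)
    (hG : ∀ i j, ContDiff ℝ 2 (G i j)) (hΨ : ContDiff ℝ (⊤ : ℕ∞) Ψ)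
    (hΨs : tsupport Ψ ⊆ closedBall 0 1) (x : E2) (r : ℝ)
    (heq : ∀ w : E2, ‖w‖ ≤ 1 → -(pd 0 (pd 0 P) (x - r • w) + pd 1 (pd 1 P) (x - r • w)) =
          ∑ i : Fin 2, ∑ j : Fin 2, pd i (pd j (G i j)) (x - r • w)) :
    r * (-r * ∑ i, ∫ z, pd i (pd i P) (x - r • z) * Ψ z) =
      ∑ i, ∑ j, ∫ z, G i j (x - r • z) * pd j (pd i Ψ) z := by
  have hΨ2 : ContDiff ℝ 2 Ψ := by exact_mod_cast contDiff_infty.1 hΨ 2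
  have hΨ1 : ContDiff ℝ 1 Ψ := hΨ.of_le (by exact_mod_cast le_top)
  have c0 : ∀ {f : E2 → ℝ} (i j : Fin 2), ContDiff ℝ 2 f → Continuous (pd i (pd j f)) := by
    intro f i j hf
    exact (contDiff_pd (n := 0) i (by simpa using contDiff_pd_one j hf)).continuous
  have hintegr : ∀ {f : E2 → ℝ} (i j : Fin 2), ContDiff ℝ 2 f →
      Integrable (fun z => pd i (pd j f) (x - r • z) * Ψ z) := fun i j hf =>
    integrable_mul_k (cont_scale (c0 i j hf) x r) hΨ.continuous (hcs_of_tsupp hΨs)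
  have h1 : ∀ i j, ∫ z, G i j (x - r • z) * pd j (pd i Ψ) z
      = r * (r * ∫ z, pd i (pd j (G i j)) (x - r • z) * Ψ z) := by
    intro i j
    rw [by_parts (contDiff_pd_one j (hG i j)) hΨ1 hΨs,
      by_parts ((hG i j).of_le (by norm_num)) (contDiff_pd_one i hΨ2) ((tsupport_pd i Ψ).trans hΨs)]
  simp_rw [h1, ← Finset.mul_sum]
  rw [neg_mul, ← mul_neg]
  congr 2
  rw [← integral_finsetSum _ (fun i _ => hintegr i i hP), ← integral_neg]
  have h2 : ∀ i, ∑ j, ∫ z, pd i (pd j (G i j)) (x - r • z) * Ψ z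
      = ∫ z, ∑ j, pd i (pd j (G i j)) (x - r • z) * Ψ z := fun i =>
    (integral_finsetSum _ (fun j _ => hintegr i j (hG i j))).symm
  simp_rw [h2]
  rw [← integral_finsetSum _ (fun i _ => integrable_finsetSum _ (fun j _ => hintegr i j (hG i j)))]
  congr 1
  ext z
  by_cases hz : ‖z‖ ≤ 1
  · have := heq z hz
    simp only [Fin.sum_univ_two] at this ⊢
    linear_combination Ψ z * this
  · rw [eq_zero_of_tsupp hΨs (not_le.1 hz)]; simp

lemma core_s19 (α δ : ℝ) (hα : α ∈ Ioo (0:ℝ) 1) (hδ : 0 < δ) :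
    ∃ C₀ : ℝ, 0 ≤ C₀ ∧ ∀ (P : E2 → ℝ) (G : Fin 2 → Fin 2 → E2 → ℝ) (M S : ℝ) (y z : E2),
      ContDiff ℝ 2 P → HasCompactSupport P → (∀ i j, ContDiff ℝ 2 (G i j)) → 0 ≤ M → 0 ≤ S →
      dist y z ≤ δ →
      (∀ w ∈ ball y (4 * δ), -(pd 0 (pd 0 P) w + pd 1 (pd 1 P) w) =
          ∑ i : Fin 2, ∑ j : Fin 2, pd i (pd j (G i j)) w) →
      (∀ i j, IsHolderOn α M (ball y (4 * δ)) (G i j)) →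
      (∀ w ∈ ball y (4 * δ), |P w| ≤ S) →
      |P y - P z| ≤ C₀ * (M + S) * dist y z ^ α := by
  obtain ⟨hα0, hα1⟩ := hα
  obtain ⟨η, Ψ, hη, hΨ, hηs, hΨs, hΨη, hc⟩ := exists_kernel
  set c := ∫ z, η z with hcdef
  have hΨ3 : ContDiff ℝ ((2:ℕ) + 1) Ψ := by exact_mod_cast contDiff_infty.1 hΨ (2 + 1)
  have hpΨ : ∀ i, ContDiff ℝ 2 (pd i Ψ) := fun i => by
    have := contDiff_pd (n := 2) i hΨ3
    simpa using this
  have hk : ∀ i j, ContDiff ℝ 1 (pd j (pd i Ψ)) := fun i j => contDiff_pd_one j (hpΨ i)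
  have hps : ∀ i, tsupport (pd i Ψ) ⊆ closedBall 0 1 := fun i => (tsupport_pd i _).trans hΨs
  have hks : ∀ i j, tsupport (pd j (pd i Ψ)) ⊆ closedBall 0 1 := fun i j =>
    (tsupport_pd j _).trans (hps i)
  have hk0 : ∀ i j, ∫ z, pd j (pd i Ψ) z = 0 := fun i j =>
    integral_pd_eq_zero ((hpΨ i).of_le (by norm_num)) (hps i) j
  obtain ⟨L, hL0, hL1, hL2⟩ : ∃ L : ℝ, 0 ≤ L ∧ (∀ i j z, |pd j (pd i Ψ) z| ≤ L) ∧
      ∀ i j z w, |pd j (pd i Ψ) z - pd j (pd i Ψ) w| ≤ L * dist z w := by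
    choose l hl0 hl1 hl2 using fun i j => lip_bound (hk i j) (hks i j)
    have hle : ∀ i j, l i j ≤ ∑ i, ∑ j, l i j := fun i j =>
      (Finset.single_le_sum (f := fun j => l i j) (fun j _ => hl0 i j) (Finset.mem_univ j)).trans
        (Finset.single_le_sum (f := fun i => ∑ j, l i j)
          (fun i _ => Finset.sum_nonneg fun j _ => hl0 i j) (Finset.mem_univ i))
    refine ⟨∑ i, ∑ j, l i j, (hl0 0 0).trans (hle 0 0), fun i j z => (hl1 i j z).trans (hle i j),
      fun i j z w => (hl2 i j z w).trans (mul_le_mul_of_nonneg_right (hle i j) dist_nonneg)⟩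
  obtain ⟨Lη, hLη0, -, hLη⟩ := lip_bound (hη.of_le (by exact_mod_cast le_top)) hηs
  have hV := VV_nonneg
  have h1α : 0 < 1 - α := by linarith
  set Q : ℝ := 8 * L * VV with hQ
  have hQ0 : 0 ≤ Q := by positivity
  refine ⟨c⁻¹ * (2 * (Q / α) + Q / (1 - α) + Lη * VV * δ ^ (-α)), by positivity, ?_⟩
  intro P G M S y z hP hPc hG hM hS hyz heq hH hPS
  rcases eq_or_lt_of_le (dist_nonneg : 0 ≤ dist y z) with hd0 | hd
  · rw [eq_comm, dist_eq_zero] at hd0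
    subst hd0
    simp only [sub_self, abs_zero]
    positivity
  set d := dist y z with hddef
  set K := M * Q with hK
  have hK0 : 0 ≤ K := by positivity
  have hmem : ∀ x : E2, dist x y ≤ δ → ∀ r : ℝ, 0 ≤ r → r ≤ δ → ∀ w : E2, ‖w‖ ≤ 2 →
      x - r • w ∈ ball y (4 * δ) := by
    intro x hx r hr0 hr w hw
    rw [mem_ball]
    have h1 : dist (x - r • w) x ≤ 2 * δ := by
      rw [dist_eq_norm, sub_sub_cancel_left, norm_neg, norm_smul, Real.norm_eq_abs, abs_of_nonneg hr0]
      nlinarith [norm_nonneg w]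
    have := dist_triangle (x - r • w) x y
    linarith
  have hGb : ∀ x : E2, dist x y ≤ δ → ∀ r : ℝ, 0 ≤ r → r ≤ δ → ∀ w : E2, ‖w‖ ≤ 2 → ∀ i j,
      |G i j (x - r • w) - G i j x| ≤ 2 * M * r ^ α := by
    intro x hx r hr0 hr w hw i j
    have h0 := hmem x hx r hr0 hr w hw
    have h1 := hmem x hx r hr0 hr 0 (by simp)
    rw [smul_zero, sub_zero] at h1
    refine (hH i j _ h0 _ h1).trans ?_
    have h2 : dist (x - r • w) x ≤ 2 * r := by
      rw [dist_eq_norm, sub_sub_cancel_left, norm_neg, norm_smul, Real.norm_eq_abs, abs_of_nonneg hr0]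
      nlinarith [norm_nonneg w]
    have h3 : dist (x - r • w) x ^ α ≤ (2 * r) ^ α := Real.rpow_le_rpow dist_nonneg h2 hα0.le
    have h4 : (2 * r) ^ α = 2 ^ α * r ^ α := Real.mul_rpow (by norm_num) hr0
    have h5 : (2:ℝ) ^ α ≤ 2 := by
      simpa using Real.rpow_le_rpow_of_exponent_le (by norm_num : (1:ℝ) ≤ 2) hα1.le
    have h6 : 0 ≤ r ^ α := Real.rpow_nonneg hr0 _
    calc M * dist (x - r • w) x ^ α ≤ M * (2 * r ^ α) :=
          mul_le_mul_of_nonneg_left (h3.trans (by rw [h4]; exact mul_le_mul_of_nonneg_right h5 h6)) hM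
      _ = 2 * M * r ^ α := by ring
  set A : E2 → ℝ → ℝ := fun x r => ∫ z, P (x - r • z) * η z with hA
  set A' : E2 → ℝ → ℝ := fun x r => -r * ∑ i, ∫ z, pd i (pd i P) (x - r • z) * Ψ z with hA'
  have hAd : ∀ x r, HasDerivAt (A x) (A' x r) r := fun x r =>
    hasDerivAt_avg hP hPc hη hΨ hηs hΨs hΨη x r
  have hAc : ∀ x, Continuous (A x) := fun x =>
    continuous_iff_continuousAt.2 fun r => (hAd x r).continuousAt
  have hform : ∀ x : E2, dist x y ≤ δ → ∀ r : ℝ, 0 ≤ r → r ≤ δ →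
      r * A' x r = ∑ i, ∑ j, ∫ z, G i j (x - r • z) * pd j (pd i Ψ) z := by
    intro x hx r hr0 hr
    exact deriv_formula hP hG hΨ hΨs x r
      (fun w hw => heq _ (hmem x hx r hr0 hr w (by linarith)))
  have hb1 : ∀ x : E2, dist x y ≤ δ → ∀ r : ℝ, 0 < r → r ≤ δ → |A' x r| ≤ K * r ^ (α - 1) := by
    intro x hx r hr0 hr
    have h1 : |r * A' x r| ≤ ∑ i : Fin 2, ∑ j : Fin 2, (2 * M * r ^ α) * L * VV := by
      rw [hform x hx r hr0.le hr]
      refine (Finset.abs_sum_le_sum_abs _ _).trans (Finset.sum_le_sum fun i _ => ?_)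
      refine (Finset.abs_sum_le_sum_abs _ _).trans (Finset.sum_le_sum fun j _ => ?_)
      exact bound_one (hG i j).continuous (hk i j).continuous (hks i j) (hk0 i j) (hL1 i j) x r
        (G i j x) (fun w hw => hGb x hx r hr0.le hr w hw i j)
    rw [abs_mul, abs_of_pos hr0] at h1
    simp only [Fin.sum_univ_two] at h1
    rw [Real.rpow_sub_one hr0.ne', ← mul_div_assoc, le_div_iff₀ hr0]
    rw [hK, hQ]
    nlinarith
  have hb2 : ∀ r : ℝ, d ≤ r → r ≤ δ → |A' y r - A' z r| ≤ K * d * r ^ (α - 2) := by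
    intro r hdr hr
    have hr0 : 0 < r := hd.trans_le hdr
    have hzy : dist z y ≤ δ := by rw [dist_comm]; exact hyz
    have h1 : |r * A' y r - r * A' z r| ≤
        ∑ i : Fin 2, ∑ j : Fin 2, (2 * M * r ^ α) * (L * (d / r)) * VV := by
      rw [hform y (by simpa using hδ.le) r hr0.le hr, hform z hzy r hr0.le hr,
        ← Finset.sum_sub_distrib]
      refine (Finset.abs_sum_le_sum_abs _ _).trans (Finset.sum_le_sum fun i _ => ?_)
      rw [← Finset.sum_sub_distrib]
      refine (Finset.abs_sum_le_sum_abs _ _).trans (Finset.sum_le_sum fun j _ => ?_)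
      exact bound_two (hG i j).continuous (hk i j).continuous (hks i j) (hL2 i j) y z r
        (G i j y) hr0 hdr (fun w hw => hGb y (by simpa using hδ.le) r hr0.le hr w hw i j)
    rw [← mul_sub, abs_mul, abs_of_pos hr0] at h1
    simp only [Fin.sum_univ_two] at h1
    have h2 : r ^ (α - 2) = r ^ α / r / r := by
      rw [← Real.rpow_sub_one hr0.ne', ← Real.rpow_sub_one hr0.ne']; congr 1; ring
    rw [h2, ← mul_div_assoc, le_div_iff₀ hr0]
    have h3 : K * d * (r ^ α / r) = 4 * ((2 * M * r ^ α) * (L * (d / r)) * VV) := by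
      rw [hK, hQ]; ring
    rw [h3]
    linarith
  have hstep1 : ∀ x : E2, dist x y ≤ δ → |A x d - A x 0| ≤ K / α * d ^ α := by
    intro x hx
    have := abs_sub_le_of_deriv (f := A x) (f' := A' x) (b := fun r => K / α * r ^ α)
      (b' := fun r => K * r ^ (α - 1)) hd.le (hAc x).continuousOn
      (continuous_const.mul (Real.continuous_rpow_const hα0.le)).continuousOn
      (fun r _ => hAd x r)
      (fun r hr => by
        have := (Real.hasDerivAt_rpow_const (x := r) (p := α) (Or.inl hr.1.ne')).const_mul (K / α)
        refine this.congr_deriv ?_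
        field_simp)
      (fun r hr => hb1 x hx r hr.1 (hr.2.le.trans hyz))
    simpa [Real.zero_rpow hα0.ne'] using this
  have hstep2 : |(A y δ - A z δ) - (A y d - A z d)| ≤ K / (1 - α) * d ^ α := by
    have := abs_sub_le_of_deriv (f := fun r => A y r - A z r) (f' := fun r => A' y r - A' z r)
      (b := fun r => -(K * d / (1 - α)) * r ^ (α - 1))
      (b' := fun r => K * d * r ^ (α - 2)) hyz ((hAc y).sub (hAc z)).continuousOn
      (fun r hr => (continuousAt_const.mul (Real.continuousAt_rpow_const _ _
        (Or.inl (hd.trans_le hr.1).ne'))).continuousWithinAt)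
      (fun r _ => (hAd y r).sub (hAd z r))
      (fun r hr => by
        have := (Real.hasDerivAt_rpow_const (x := r) (p := α - 1)
          (Or.inl (hd.trans hr.1).ne')).const_mul (-(K * d / (1 - α)))
        refine this.congr_deriv ?_
        rw [show α - 1 - 1 = α - 2 by ring]
        field_simp
        ring)
      (fun r hr => hb2 r hr.1.le hr.2.le)
    refine this.trans ?_
    have h1 : d ^ α = d * d ^ (α - 1) := by
      rw [Real.rpow_sub_one hd.ne']; field_simp
    have h2 : 0 ≤ K * d / (1 - α) * δ ^ (α - 1) := by positivity
    have h3 : K / (1 - α) * d ^ α = K * d / (1 - α) * d ^ (α - 1) := by rw [h1]; ring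
    rw [h3]
    linarith
  have hstep3 : |A y δ - A z δ| ≤ S * (Lη * VV * δ ^ (-α)) * d ^ α := by
    have h1 := bound_two hP.continuous hη.continuous hηs hLη y z δ 0 hδ hyz
      (N := S) (fun w hw => by
        rw [sub_zero]; exact hPS _ (hmem y (by simpa using hδ.le) δ hδ.le le_rfl w hw))
    refine h1.trans ?_
    have h2 : d / δ ≤ δ ^ (-α) * d ^ α := by
      have h3 : d / δ ≤ (d / δ) ^ α := by
        have := Real.rpow_le_rpow_of_exponent_ge (div_pos hd hδ) ((div_le_one hδ).2 hyz) hα1.le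
        simpa using this
      rw [Real.div_rpow hd.le hδ.le] at h3
      rw [Real.rpow_neg hδ.le]
      refine h3.trans (le_of_eq (by ring))
    calc S * (Lη * (d / δ)) * VV = S * Lη * VV * (d / δ) := by ring
      _ ≤ S * Lη * VV * (δ ^ (-α) * d ^ α) := mul_le_mul_of_nonneg_left h2 (by positivity)
      _ = _ := by ring
  have hA0 : ∀ x, A x 0 = P x * c := by
    intro x
    simp only [hA, zero_smul, sub_zero]
    rw [integral_const_mul]
  have e1 := hstep1 y (by simpa using hδ.le)
  have e2 := hstep1 z (by rw [dist_comm]; exact hyz)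
  rw [hA0] at e1 e2
  have hfin : |P y - P z| * c ≤ (2 * (K / α) + K / (1 - α) + S * (Lη * VV * δ ^ (-α))) * d ^ α := by
    have hab : |P y - P z| * c = |(P y - P z) * c| := by rw [abs_mul, abs_of_pos hc]
    rw [hab]
    rw [abs_le] at e1 e2 hstep2 hstep3 ⊢
    constructor <;> nlinarith [e1.1, e1.2, e2.1, e2.2, hstep2.1, hstep2.2, hstep3.1, hstep3.2]
  rw [← le_div_iff₀ hc] at hfin
  refine hfin.trans ?_
  rw [div_eq_mul_inv, mul_right_comm]
  refine mul_le_mul_of_nonneg_right ?_ (by positivity)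
  rw [mul_comm _ c⁻¹, mul_assoc c⁻¹]
  refine mul_le_mul_of_nonneg_left ?_ (inv_pos.2 hc).le
  have t1 : K / α = Q / α * M := by rw [hK]; ring
  have t2 : K / (1 - α) = Q / (1 - α) * M := by rw [hK]; ring
  rw [t1, t2]
  have u1 : 0 ≤ Q / α * S := by positivity
  have u2 : 0 ≤ Q / (1 - α) * S := by positivity
  have u3 : 0 ≤ Lη * VV * δ ^ (-α) * M := by positivity
  nlinarith

lemma le_supS {S : Set E2} {f : E2 → ℝ} {B : ℝ} (hB : ∀ y ∈ S, |f y| ≤ B) {y : E2} (hy : y ∈ S) :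
    |f y| ≤ ⨆ y ∈ S, |f y| := by
  have hB0 : 0 ≤ B := (abs_nonneg _).trans (hB y hy)
  have hbdd : BddAbove (range fun y => ⨆ (_ : y ∈ S), |f y|) := by
    refine ⟨B, ?_⟩
    rintro _ ⟨w, rfl⟩
    exact Real.iSup_le (fun h => hB w h) hB0
  have h1 := le_ciSup hbdd y
  have h2 : (⨆ (_ : y ∈ S), |f y|) = |f y| := ciSup_pos hy
  rw [← h2]
  exact h1

lemma supS_le {S : Set E2} {f : E2 → ℝ} {B : ℝ} (hB0 : 0 ≤ B) (hB : ∀ y ∈ S, |f y| ≤ B) :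
    (⨆ y ∈ S, |f y|) ≤ B :=
  Real.iSup_le (fun y => Real.iSup_le (fun h => hB y h) hB0) hB0

lemma supS_nonneg {S : Set E2} {f : E2 → ℝ} : 0 ≤ ⨆ y ∈ S, |f y| :=
  Real.iSup_nonneg fun _ => Real.iSup_nonneg fun _ => abs_nonneg _

lemma holder_sInf_nonneg {α : ℝ} {S : Set E2} {f : E2 → ℝ} :
    0 ≤ sInf {M : ℝ | 0 ≤ M ∧ IsHolderOn α M S f} :=
  Real.sInf_nonneg fun _ h => h.1

lemma sInf_holder {α : ℝ} {S : Set E2} {f : E2 → ℝ} {M : ℝ} (hM : 0 ≤ M)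
    (h : IsHolderOn α M S f) : IsHolderOn α (sInf {M : ℝ | 0 ≤ M ∧ IsHolderOn α M S f}) S f := by
  intro y hy z hz
  have hne : {M : ℝ | 0 ≤ M ∧ IsHolderOn α M S f}.Nonempty := ⟨M, hM, h⟩
  have hp : 0 ≤ dist y z ^ α := Real.rpow_nonneg dist_nonneg _
  rcases eq_or_lt_of_le hp with h0 | h0
  · have := h y hy z hz
    rw [← h0] at this ⊢
    simpa using this
  · rw [← div_le_iff₀ h0]
    apply le_csInf hne
    rintro N ⟨_, hN⟩
    rw [div_le_iff₀ h0]
    exact hN y hy z hz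

lemma holderNorm_le {α : ℝ} {S : Set E2} {f : E2 → ℝ} {B M : ℝ} (hB : 0 ≤ B) (hM : 0 ≤ M)
    (h1 : ∀ y ∈ S, |f y| ≤ B) (h : IsHolderOn α M S f) : holderNorm α S f ≤ B + M :=
  add_le_add (supS_le hB h1) (csInf_le ⟨0, fun _ h => h.1⟩ ⟨hM, h⟩)

lemma exists_holder {α : ℝ} (hα : α ∈ Ioo (0:ℝ) 1) {Ω U : Set E2} (hΩb : Bornology.IsBounded Ω)
    (hU : IsOpen U) (hΩU : closure Ω ⊆ U) {f : E2 → ℝ} (hf : ContDiffOn ℝ 2 f U) :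
    ∃ M, 0 ≤ M ∧ IsHolderOn α M Ω f := by
  have hcomp : IsCompact (closure Ω) := hΩb.isCompact_closure
  have hll : LocallyLipschitzOn (closure Ω) f := by
    intro x hx
    have h1 : ContDiffAt ℝ 1 f x :=
      ((hf.contDiffAt (hU.mem_nhds (hΩU hx))).of_le (by norm_num))
    obtain ⟨K, t, ht, hK⟩ := h1.exists_lipschitzOnWith
    exact ⟨K, t, mem_nhdsWithin_of_mem_nhds ht, hK⟩
  obtain ⟨K, hK⟩ := hll.exists_lipschitzOnWith_of_compact hcomp
  refine ⟨K * diam Ω ^ (1 - α), mul_nonneg K.2 (Real.rpow_nonneg diam_nonneg _), ?_⟩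
  intro y hy z hz
  have h1 := hK.dist_le_mul y (subset_closure hy) z (subset_closure hz)
  rw [Real.dist_eq] at h1
  refine h1.trans ?_
  rw [mul_assoc]
  refine mul_le_mul_of_nonneg_left ?_ K.2
  have h2 : dist y z = dist y z ^ (1 - α) * dist y z ^ α := by
    rw [← Real.rpow_add_of_nonneg dist_nonneg (by linarith [hα.2]) hα.1.le]
    simp
  conv_lhs => rw [h2]
  refine mul_le_mul_of_nonneg_right ?_ (Real.rpow_nonneg dist_nonneg _)
  exact Real.rpow_le_rpow dist_nonneg (dist_le_diam_of_mem hΩb hy hz) (by linarith [hα.2])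

lemma exists_bound {Ω U : Set E2} (hΩb : Bornology.IsBounded Ω) (hΩU : closure Ω ⊆ U)
    {f : E2 → ℝ} (hf : ContDiffOn ℝ 2 f U) : ∃ B, ∀ y ∈ Ω, |f y| ≤ B := by
  obtain ⟨B, hB⟩ := hΩb.isCompact_closure.exists_bound_of_continuousOn (hf.continuousOn.mono hΩU)
  exact ⟨B, fun y hy => hB y (subset_closure hy)⟩

lemma contDiff_cutoff {θ f : E2 → ℝ} {U : Set E2} (hU : IsOpen U) (hθ : ContDiff ℝ 2 θ)
    (hθU : tsupport θ ⊆ U) (hf : ContDiffOn ℝ 2 f U) : ContDiff ℝ 2 (fun x => θ x * f x) := by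
  rw [contDiff_iff_contDiffAt]
  intro x
  by_cases hx : x ∈ U
  · exact hθ.contDiffAt.mul (hf.contDiffAt (hU.mem_nhds hx))
  · have h0 : θ =ᶠ[𝓝 x] 0 := notMem_tsupport_iff_eventuallyEq.1 (fun h => hx (hθU h))
    have h1 : (fun x => θ x * f x) =ᶠ[𝓝 x] fun _ => 0 := by
      filter_upwards [h0] with w hw
      rw [hw]; simp
    exact contDiffAt_const.congr_of_eventuallyEq h1

lemma pd_congr {f g : E2 → ℝ} {B : Set E2} (hB : IsOpen B) (h : ∀ w ∈ B, f w = g w) (i : Fin 2) :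
    ∀ w ∈ B, pd i f w = pd i g w := by
  intro w hw
  have : f =ᶠ[𝓝 w] g := by
    filter_upwards [hB.mem_nhds hw] with v hv using h v hv
  rw [pd, pd, this.fderiv_eq]

lemma local_est (α δ : ℝ) (hα : α ∈ Ioo (0:ℝ) 1) (hδ : 0 < δ) :
    ∃ C₀ : ℝ, 0 ≤ C₀ ∧ ∀ (P : E2 → ℝ) (G : Fin 2 → Fin 2 → E2 → ℝ) (M S : ℝ) (y z : E2)
      (U V : Set E2), IsOpen U → IsOpen V → closedBall y (5 * δ) ⊆ U → closedBall y (5 * δ) ⊆ V →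
      ContDiffOn ℝ 2 P U → (∀ i j, ContDiffOn ℝ 2 (G i j) V) → 0 ≤ M → 0 ≤ S →
      dist y z ≤ δ →
      (∀ w ∈ ball y (4 * δ), -(pd 0 (pd 0 P) w + pd 1 (pd 1 P) w) =
          ∑ i : Fin 2, ∑ j : Fin 2, pd i (pd j (G i j)) w) →
      (∀ i j, IsHolderOn α M (ball y (4 * δ)) (G i j)) →
      (∀ w ∈ ball y (4 * δ), |P w| ≤ S) →
      |P y - P z| ≤ C₀ * (M + S) * dist y z ^ α := by
  obtain ⟨C₀, hC₀, hcore⟩ := core_s19 α δ hα hδ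
  refine ⟨C₀, hC₀, ?_⟩
  intro P G M S y z U V hU hV hyU hyV hP hG hM hS hyz heq hH hPS
  let θ : ContDiffBump y := ⟨4 * δ, 5 * δ, by positivity, by linarith⟩
  have hθ1 : ∀ w ∈ ball y (4 * δ), θ w = 1 := fun w hw =>
    θ.one_of_mem_closedBall (ball_subset_closedBall hw)
  have hθs : tsupport θ = closedBall y (5 * δ) := θ.tsupport_eq
  have hcut : ∀ f : E2 → ℝ, ∀ w ∈ ball y (4 * δ), θ w * f w = f w := fun f w hw => by
    rw [hθ1 w hw, one_mul]
  have hcut2 : ∀ (f : E2 → ℝ) (i j : Fin 2), ∀ w ∈ ball y (4 * δ),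
      pd i (pd j (fun x => θ x * f x)) w = pd i (pd j f) w := fun f i j =>
    pd_congr isOpen_ball (pd_congr isOpen_ball (hcut f) j) i
  have hy : y ∈ ball y (4 * δ) := mem_ball_self (by positivity)
  have hz : z ∈ ball y (4 * δ) := by rw [mem_ball, dist_comm]; linarith
  have := hcore (fun x => θ x * P x) (fun i j x => θ x * G i j x) M S y z
    (contDiff_cutoff hU θ.contDiff (by rw [hθs]; exact hyU) hP)
    θ.hasCompactSupport.mul_right
    (fun i j => contDiff_cutoff hV θ.contDiff (by rw [hθs]; exact hyV) (hG i j)) hM hS hyz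
    (fun w hw => by
      have := heq w hw
      simp only [hcut2 _ _ _ w hw]
      exact this)
    (fun i j u hu v hv => by
      have := hH i j u hu v hv
      simp only [hcut _ u hu, hcut _ v hv]
      exact this)
    (fun w hw => by
      simp only [hcut _ w hw]
      exact hPS w hw)
  simpa only [hcut _ y hy, hcut _ z hz] using this


theorem stmt_19
    (Ω : Set E2) (hΩo : IsOpen Ω) (hΩb : Bornology.IsBounded Ω)
    (α : ℝ) (hα : α ∈ Ioo (0:ℝ) 1)
    (χ : E2 → ℝ) (hχsm : ContDiff ℝ (⊤ : ℕ∞) χ) (hχc : HasCompactSupport χ)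
    (hχsupp : tsupport χ ⊆ Ω) :
    ∃ C D : ℝ, 0 < C ∧ 0 < D ∧
      ∀ (G : Fin 2 → Fin 2 → E2 → ℝ) (P : E2 → ℝ),
        (∃ U : Set E2, IsOpen U ∧ closure Ω ⊆ U ∧ ∀ i j : Fin 2, ContDiffOn ℝ 2 (G i j) U) →
        (∃ U : Set E2, IsOpen U ∧ closure Ω ⊆ U ∧ ContDiffOn ℝ 2 P U) →
        (∀ y ∈ Ω, -(pd 0 (pd 0 P) y + pd 1 (pd 1 P) y) =
          ∑ i : Fin 2, ∑ j : Fin 2, pd i (pd j (G i j)) y) →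
        holderNorm α Ω (fun y => χ y * P y) ≤
          C * (∑ i : Fin 2, ∑ j : Fin 2, holderNorm α Ω (G i j)) + D * ⨆ y ∈ Ω, |P y| := by

  obtain ⟨ε, hε, hεΩ⟩ := hχc.isCompact.exists_cthickening_subset_open hΩo hχsupp
  set δ := ε / 5 with hδdef
  have hδ : 0 < δ := by positivity
  have hball : ∀ y ∈ tsupport χ, closedBall y (5 * δ) ⊆ Ω := fun y hy =>
    (closedBall_subset_cthickening hy (5 * δ)).trans (by
      rw [show 5 * δ = ε by rw [hδdef]; ring]; exact hεΩ)
  obtain ⟨C₀, hC₀, hest⟩ := local_est α δ hα hδ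
  obtain ⟨B, hB⟩ := hχc.exists_bound_of_continuous hχsm.continuous
  have hB0 : 0 ≤ B := (norm_nonneg _).trans (hB 0)
  obtain ⟨Lc, hLc⟩ := ContDiff.lipschitzWith_of_hasCompactSupport hχc hχsm (by simp)
  obtain ⟨L, hL0, hL⟩ : ∃ L : ℝ, 0 ≤ L ∧ ∀ y z, |χ y - χ z| ≤ L * dist y z :=
    ⟨Lc, Lc.2, fun y z => by rw [← Real.dist_eq]; exact hLc.dist_le_mul y z⟩
  set T : ℝ := L * δ ^ (1 - α) + 2 * B * δ ^ (-α) with hT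
  have hT0 : 0 ≤ T := by positivity
  refine ⟨B * C₀ + 1, B + B * C₀ + T + 1, by positivity, by positivity, ?_⟩
  rintro G P ⟨V, hV, hΩV, hG⟩ ⟨U, hU, hΩU, hP⟩ heq
  set M := ∑ i : Fin 2, ∑ j : Fin 2, holderNorm α Ω (G i j) with hM
  set S := ⨆ y ∈ Ω, |P y| with hS
  have hS0 : 0 ≤ S := supS_nonneg
  have hn0 : ∀ i j, 0 ≤ holderNorm α Ω (G i j) := fun i j => add_nonneg supS_nonneg holder_sInf_nonneg
  have hM0 : 0 ≤ M := Finset.sum_nonneg fun i _ => Finset.sum_nonneg fun j _ => hn0 i j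
  have hnM : ∀ i j, holderNorm α Ω (G i j) ≤ M := fun i j =>
      (Finset.single_le_sum (f := fun j => holderNorm α Ω (G i j)) (fun j _ => hn0 i j)
        (Finset.mem_univ j)).trans
        (Finset.single_le_sum (f := fun i => ∑ j, holderNorm α Ω (G i j))
          (fun i _ => Finset.sum_nonneg fun j _ => hn0 i j) (Finset.mem_univ i))
  have hGH : ∀ i j, IsHolderOn α M Ω (G i j) := by
    intro i j y hy z hz
    obtain ⟨N, hN0, hN⟩ := exists_holder hα hΩb hV hΩV (hG i j)
    refine (sInf_holder hN0 hN y hy z hz).trans ?_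
    refine mul_le_mul_of_nonneg_right (le_trans ?_ (hnM i j)) (Real.rpow_nonneg dist_nonneg _)
    exact le_add_of_nonneg_left supS_nonneg
  obtain ⟨BP, hBP⟩ := exists_bound hΩb hΩU hP
  have hPS : ∀ y ∈ Ω, |P y| ≤ S := fun y hy => le_supS hBP hy
  have hΩU' : Ω ⊆ U := subset_closure.trans hΩU
  have hΩV' : Ω ⊆ V := subset_closure.trans hΩV
  set N : ℝ := B * C₀ * (M + S) + T * S with hN
  have hN0 : 0 ≤ N := by positivity
  have hone : ∀ y ∈ tsupport χ, ∀ z ∈ Ω, |χ y * P y - χ z * P z| ≤ N * dist y z ^ α := by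
    intro y hy z hz
    have hyΩ := hχsupp hy
    have hχy : |χ y| ≤ B := hB y
    have hχz : |χ z| ≤ B := hB z
    have hp0 : 0 ≤ dist y z ^ α := Real.rpow_nonneg dist_nonneg _
    rcases le_or_gt (dist y z) δ with hd | hd
    · have hb4 : ball y (4 * δ) ⊆ Ω :=
        (ball_subset_closedBall.trans (closedBall_subset_closedBall (by linarith))).trans (hball y hy)
      have h1 := hest P G M S y z U V hU hV ((hball y hy).trans hΩU') ((hball y hy).trans hΩV')
        hP hG hM0 hS0 hd (fun w hw => heq w (hb4 hw))
        (fun i j u hu v hv => hGH i j u (hb4 hu) v (hb4 hv)) (fun w hw => hPS w (hb4 hw))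
      have h2 : dist y z ≤ δ ^ (1 - α) * dist y z ^ α := by
        have h3 : dist y z = dist y z ^ (1 - α) * dist y z ^ α := by
          rw [← Real.rpow_add_of_nonneg dist_nonneg (by linarith [hα.2]) hα.1.le]
          simp
        conv_lhs => rw [h3]
        exact mul_le_mul_of_nonneg_right
          (Real.rpow_le_rpow dist_nonneg hd (by linarith [hα.2])) hp0
      have e1 : |χ y * (P y - P z)| ≤ B * (C₀ * (M + S) * dist y z ^ α) := by
        rw [abs_mul]; exact mul_le_mul hχy h1 (abs_nonneg _) hB0
      have e2 : |(χ y - χ z) * P z| ≤ (L * (δ ^ (1 - α) * dist y z ^ α)) * S := by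
        rw [abs_mul]
        exact mul_le_mul ((hL y z).trans (mul_le_mul_of_nonneg_left h2 hL0)) (hPS z hz)
          (abs_nonneg _) (by positivity)
      have e3 : 0 ≤ 2 * B * δ ^ (-α) * S * dist y z ^ α := by positivity
      calc |χ y * P y - χ z * P z| = |χ y * (P y - P z) + (χ y - χ z) * P z| := by congr 1; ring
        _ ≤ |χ y * (P y - P z)| + |(χ y - χ z) * P z| := abs_add_le _ _
        _ ≤ B * (C₀ * (M + S) * dist y z ^ α) + (L * (δ ^ (1 - α) * dist y z ^ α)) * S
            + 2 * B * δ ^ (-α) * S * dist y z ^ α := by linarith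
        _ = N * dist y z ^ α := by rw [hN, hT]; ring
    · have h1 : 1 ≤ δ ^ (-α) * dist y z ^ α := by
        have : δ ^ (-α) * δ ^ α = 1 := by
          rw [← Real.rpow_add hδ]; simp
        rw [← this]
        exact mul_le_mul_of_nonneg_left (Real.rpow_le_rpow hδ.le hd.le hα.1.le)
          (Real.rpow_nonneg hδ.le _)
      have e1 : |χ y * P y| ≤ B * S := by
        rw [abs_mul]; exact mul_le_mul hχy (hPS y hyΩ) (abs_nonneg _) hB0
      have e2 : |χ z * P z| ≤ B * S := by
        rw [abs_mul]; exact mul_le_mul hχz (hPS z hz) (abs_nonneg _) hB0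
      have e3 : 0 ≤ (B * C₀ * (M + S) + L * δ ^ (1 - α) * S) * dist y z ^ α := by positivity
      have e4 : 2 * (B * S) * 1 ≤ 2 * (B * S) * (δ ^ (-α) * dist y z ^ α) :=
        mul_le_mul_of_nonneg_left h1 (by positivity)
      calc |χ y * P y - χ z * P z| ≤ |χ y * P y| + |χ z * P z| := abs_sub _ _
        _ ≤ 2 * (B * S) * (δ ^ (-α) * dist y z ^ α)
            + (B * C₀ * (M + S) + L * δ ^ (1 - α) * S) * dist y z ^ α := by linarith
        _ = N * dist y z ^ α := by rw [hN, hT]; ring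
  have hfin := holderNorm_le (α := α) (S := Ω) (f := fun y => χ y * P y) (B := B * S) (M := N)
    (by positivity) hN0
    (fun y hy => by
      rw [abs_mul]; exact mul_le_mul (hB y) (hPS y hy) (abs_nonneg _) hB0)
    (by
      intro y hy z hz
      by_cases hyt : y ∈ tsupport χ
      · exact hone y hyt z hz
      by_cases hzt : z ∈ tsupport χ
      · have := hone z hzt y hy
        rw [abs_sub_comm, dist_comm] at this
        exact this
      · simp only [image_eq_zero_of_notMem_tsupport hyt, image_eq_zero_of_notMem_tsupport hzt]
        have : 0 ≤ dist y z ^ α := Real.rpow_nonneg dist_nonneg _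
        simp only [zero_mul, sub_self, abs_zero]
        positivity)
  refine hfin.trans ?_
  rw [hN]
  nlinarith
end
end
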